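/- Let V1 be a subsystem of a Steiner triple system V with V1 ≠ V. Then there is an integer N such that for every integer u with u ≥ N and u ≡ 1 or 3 (mod 6), there exists a Steiner triple system U on u points containing copies of V and V1 as subsystems, both invariant under Aut U, such that Aut U is isomorphic to the set-stabilizer (Aut V)_{V1} = {g ∈ Aut V : g maps V1 onto itself}, and Aut U acts on the copy of V as that stabilizer. -/

import Mathlib

open Finset

noncomputable section
open scoped Classical

/-- `T` is the set of triples of a Steiner triple system on the finite type `α`:
every pair of distinct points lies in exactly one triple. -/
def IsSTS {α : Type*} (T : Finset (Finset α)) : Prop :=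
  (∀ t ∈ T, t.card = 3) ∧
    ∀ p q : α, p ≠ q → ∃! t : Finset α, t ∈ T ∧ p ∈ t ∧ q ∈ t

/-- `T` is the set of triples of a partial Steiner triple system on `α`:
every pair of distinct points lies in at most one triple. -/
def IsPSTS {α : Type*} (T : Finset (Finset α)) : Prop :=
  (∀ t ∈ T, t.card = 3) ∧
    ∀ p q : α, p ≠ q → ∀ t₁ ∈ T, ∀ t₂ ∈ T, p ∈ t₁ → q ∈ t₁ → p ∈ t₂ → q ∈ t₂ → t₁ = t₂

/-- `W` is a (closed) subsystem of the triple system `T`. -/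
def IsSub {α : Type*} (T : Finset (Finset α)) (W : Finset α) : Prop :=
  ∀ t ∈ T, 2 ≤ (t ∩ W).card → t ⊆ W

/-- `g` is an automorphism of the triple system `T`. -/
def IsAut {α : Type*} (T : Finset (Finset α)) (g : Equiv.Perm α) : Prop :=
  ∀ t : Finset α, t ∈ T ↔ t.image g ∈ T

/-- The automorphism group of a triple system, as a subgroup of the permutation group. -/
def autGroup {α : Type*} (T : Finset (Finset α)) : Subgroup (Equiv.Perm α) where
  carrier := {g : Equiv.Perm α | IsAut T g}
  one_mem' := by
    intro t
    simp
  mul_mem' := by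
    intro a b ha hb t
    have h1 := hb t
    have h2 := ha (t.image b)
    have key : t.image ⇑(a * b) = (t.image ⇑b).image ⇑a := by
      rw [Equiv.Perm.coe_mul, Finset.image_image]
    rw [key, ← h2]
    exact h1
  inv_mem' := by
    intro a ha t
    have h := ha (t.image ⇑a⁻¹)
    have key : (t.image ⇑a⁻¹).image ⇑a = t := by
      rw [Finset.image_image]
      have hc : (⇑a ∘ ⇑a⁻¹) = id := by
        funext x
        simp
      rw [hc, Finset.image_id]
    rw [key] at h
    exact h.symm

/-- `φ` embeds the triple system `S` onto a subsystem of `T`: it is injective, maps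
triples of `S` to triples of `T`, and the triples of `T` inside the image of `φ` are
precisely the images of the triples of `S`. -/
def IsCopy {α β : Type*} [Fintype α] (S : Finset (Finset α)) (T : Finset (Finset β))
    (φ : α → β) : Prop :=
  Function.Injective φ ∧ (∀ s ∈ S, s.image φ ∈ T) ∧
    ∀ t ∈ T, t ⊆ Finset.univ.image φ → ∃ s ∈ S, t = s.image φ

/-- The point set `W` is invariant under every automorphism of `T`. -/
def AutInvariant {β : Type*} (T : Finset (Finset β)) (W : Finset β) : Prop :=
  ∀ g : Equiv.Perm β, IsAut T g → W.image g = W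

/-- For the copy of `S` inside `T` given by `φ`, restriction gives a group isomorphism
from `Aut T` onto `Aut S`: every automorphism of `T` induces (via `φ`) an automorphism
of `S`, and every automorphism of `S` is induced by exactly one automorphism of `T`. -/
def AutRestrictIso {α β : Type*} (T : Finset (Finset β)) (S : Finset (Finset α))
    (φ : α → β) : Prop :=
  (∀ g : Equiv.Perm β, IsAut T g →
      ∃ h : Equiv.Perm α, IsAut S h ∧ ∀ x : α, g (φ x) = φ (h x)) ∧
    ∀ h : Equiv.Perm α, IsAut S h →
      ∃! g : Equiv.Perm β, IsAut T g ∧ ∀ x : α, g (φ x) = φ (h x)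

/-- `φ` embeds `S` as an `Aut T`-invariant subsystem of `T` on which `Aut T` induces
the full automorphism group of `S`, with `Aut T ≅ Aut S` via restriction. -/
def FullEmbedding {α β : Type*} [Fintype α] (S : Finset (Finset α)) (T : Finset (Finset β))
    (φ : α → β) : Prop :=
  IsCopy S T φ ∧ AutInvariant T (Finset.univ.image φ) ∧ AutRestrictIso T S φ

/-- The points of the projective space `PG(n,2)`: nonzero vectors of `GF(2)^{n+1}`. -/
abbrev PGPoint (n : ℕ) := {x : Fin (n + 1) → ZMod 2 // x ≠ 0}

/-- The lines of `PG(n,2)`: 3-sets of nonzero vectors summing to `0`. -/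
def PGTriples (n : ℕ) : Finset (Finset (PGPoint n)) :=
  Finset.univ.filter fun t : Finset (PGPoint n) =>
    t.card = 3 ∧ ∑ v ∈ t, (v : Fin (n + 1) → ZMod 2) = 0

/-- The smallest subsystem of `T` containing the point set `P`. -/
def GeneratedSub {α : Type*} [Fintype α] (T : Finset (Finset α)) (P : Finset α) : Finset α :=
  Finset.univ.filter fun x => ∀ W : Finset α, IsSub T W → P ⊆ W → x ∈ W

/-- `W` is a subsystem of `T` isomorphic to `PG(n,2)`. -/
def IsPGSub {α : Type*} [Fintype α] (n : ℕ) (T : Finset (Finset α)) (W : Finset α) : Prop :=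
  ∃ φ : PGPoint n → α, IsCopy (PGTriples n) T φ ∧ Finset.univ.image φ = W

/-- A triple system is `PG(2,2)`-paired if any two distinct points lie in at least two
subsystems isomorphic to `PG(2,2)`. -/
def PG22Paired {α : Type*} [Fintype α] (T : Finset (Finset α)) : Prop :=
  ∀ p q : α, p ≠ q → ∃ W₁ W₂ : Finset α, W₁ ≠ W₂ ∧
    (p ∈ W₁ ∧ q ∈ W₁ ∧ IsPGSub 2 T W₁) ∧ p ∈ W₂ ∧ q ∈ W₂ ∧ IsPGSub 2 T W₂

/-- `T` is `PG(3,2)`-2-pointed with respect to the points `p, q`: any four points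
including `p` and `q` generate a subsystem isomorphic to `PG(2,2)` or `PG(3,2)`. -/
def PG32TwoPointed {α : Type*} [Fintype α] (T : Finset (Finset α)) (p q : α) : Prop :=
  p ≠ q ∧ ∀ s : Finset α, s.card = 4 → p ∈ s → q ∈ s →
    IsPGSub 2 T (GeneratedSub T s) ∨ IsPGSub 3 T (GeneratedSub T s)

/-- The copy of `Y` inside `2Y+1`. -/
def dp0 {γ : Type*} (a : γ) : γ ⊕ γ ⊕ Unit := Sum.inl a

/-- The disjoint copy `Y₁` of `Y` inside `2Y+1`. -/
def dp1 {γ : Type*} (a : γ) : γ ⊕ γ ⊕ Unit := Sum.inr (Sum.inl a)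

/-- The extra point `*` of `2Y+1`. -/
def dpStar {γ : Type*} : γ ⊕ γ ⊕ Unit := Sum.inr (Sum.inr ())

/-- The triples of the Steiner triple system `2Y+1` built from a system `Y` with
triple set `T`. -/
def DoubleTriples {γ : Type*} [Fintype γ] (T : Finset (Finset γ)) :
    Finset (Finset (γ ⊕ γ ⊕ Unit)) :=
  Finset.univ.filter fun t : Finset (γ ⊕ γ ⊕ Unit) =>
    (∃ s ∈ T, t = s.image dp0) ∨
    (∃ a : γ, t = {dpStar, dp0 a, dp1 a}) ∨
    (∃ a b c : γ, ({a, b, c} : Finset γ) ∈ T ∧ t = {dp1 a, dp1 b, dp0 c})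

/-- The triples of the direct product of two triple systems. -/
def ProdTriples {α β : Type*} [Fintype α] [Fintype β]
    (TA : Finset (Finset α)) (TB : Finset (Finset β)) : Finset (Finset (α × β)) :=
  Finset.univ.filter fun t : Finset (α × β) =>
    (∃ a : α, ∃ s ∈ TB, t = s.image fun b => (a, b)) ∨
    (∃ b : β, ∃ s ∈ TA, t = s.image fun a => (a, b)) ∨
    (∃ a₁ a₂ a₃ : α, ∃ b₁ b₂ b₃ : β, ({a₁, a₂, a₃} : Finset α) ∈ TA ∧
      ({b₁, b₂, b₃} : Finset β) ∈ TB ∧ t = {(a₁, b₁), (a₂, b₂), (a₃, b₃)})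

/-- The triples of Moore's construction `U = X ∪ (V × A)`.  Here `TX` (on `δ`), `TV`
(on `α`), `TY` (on `γ`) are the triple sets of `X`, `V`, `Y`; `j : δ → γ` embeds `X`
as a subsystem of `Y` and `ℓ : A → γ` labels `Y − X` by the group `A`. -/
def MooreTriples {δ α γ A : Type*} [Fintype δ] [Fintype α] [Fintype A] [Group A]
    (TX : Finset (Finset δ)) (TV : Finset (Finset α)) (TY : Finset (Finset γ))
    (j : δ → γ) (ℓ : A → γ) : Finset (Finset (δ ⊕ α × A)) :=
  Finset.univ.filter fun t : Finset (δ ⊕ α × A) =>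
    (∃ s ∈ TX, t = s.image Sum.inl) ∨
    (∃ v : α, ∃ a₁ a₂ : A, ∃ x : δ, ({ℓ a₁, ℓ a₂, j x} : Finset γ) ∈ TY ∧
      t = {Sum.inr (v, a₁), Sum.inr (v, a₂), Sum.inl x}) ∨
    (∃ v : α, ∃ a₁ a₂ a₃ : A, ({ℓ a₁, ℓ a₂, ℓ a₃} : Finset γ) ∈ TY ∧
      t = {Sum.inr (v, a₁), Sum.inr (v, a₂), Sum.inr (v, a₃)}) ∨
    (∃ v₁ v₂ v₃ : α, ∃ a₁ a₂ a₃ : A, ({v₁, v₂, v₃} : Finset α) ∈ TV ∧ a₁ * a₂ * a₃ = 1 ∧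
      t = {Sum.inr (v₁, a₁), Sum.inr (v₂, a₂), Sum.inr (v₃, a₃)})

/-- The hypotheses of Moore's construction: `Y` and `V` are Steiner triple systems,
`A` is a cyclic group, `j` embeds `X` as a subsystem of `Y` (with triple set `TX`),
and `ℓ` is a bijective labeling of `Y − X` by `A`. -/
def MooreSetup {δ α γ A : Type*} [Fintype δ] [Group A]
    (TX : Finset (Finset δ)) (TV : Finset (Finset α)) (TY : Finset (Finset γ))
    (j : δ → γ) (ℓ : A → γ) : Prop :=
  IsSTS TY ∧ IsSTS TV ∧ IsCyclic A ∧ Function.Injective j ∧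
    IsSub TY (Finset.univ.image j) ∧ IsCopy TX TY j ∧
    Function.Injective ℓ ∧ Set.range ℓ = (Set.range j)ᶜ

/-- The subsystem `Y_v = X ∪ (v × A)` of Moore's construction. -/
def MooreY {δ α A : Type*} [Fintype δ] [Fintype A] (v : α) : Finset (δ ⊕ α × A) :=
  (Finset.univ.image (Sum.inl : δ → δ ⊕ α × A)) ∪
    Finset.univ.image fun a : A => (Sum.inr (v, a) : δ ⊕ α × A)

/-- A subsystem of type (3.1) of Moore's construction, where `ε` denotes the unique
involution `−1` of `A`: the seven points `x, (v_i, a_i), (v_i, −a_i)` for a triple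
`{v₁,v₂,v₃}` of `V`, with `a₁a₂a₃ = 1` and `{a_i, −a_i, x}` a triple of `Y`. -/
def MooreType31 {δ α γ A : Type*} [Group A] (TV : Finset (Finset α))
    (TY : Finset (Finset γ)) (j : δ → γ) (ℓ : A → γ) (ε : A)
    (W : Finset (δ ⊕ α × A)) : Prop :=
  ∃ v₁ v₂ v₃ : α, ∃ a₁ a₂ a₃ : A, ∃ x : δ,
    ({v₁, v₂, v₃} : Finset α) ∈ TV ∧ a₁ * a₂ * a₃ = 1 ∧
    ({ℓ a₁, ℓ (ε * a₁), j x} : Finset γ) ∈ TY ∧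
    ({ℓ a₂, ℓ (ε * a₂), j x} : Finset γ) ∈ TY ∧
    ({ℓ a₃, ℓ (ε * a₃), j x} : Finset γ) ∈ TY ∧
    W = {Sum.inl x, Sum.inr (v₁, a₁), Sum.inr (v₁, ε * a₁), Sum.inr (v₂, a₂),
         Sum.inr (v₂, ε * a₂), Sum.inr (v₃, a₃), Sum.inr (v₃, ε * a₃)}

/-- The point set of a family of triples. -/
def ptsOf {β : Type*} (T : Finset (Finset β)) : Finset β := T.sup id

/-- Adjacency of triples: two distinct triples of `T` meeting in a point. -/
def TriAdj {β : Type*} (T : Finset (Finset β)) (t s : Finset β) : Prop :=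
  t ∈ T ∧ s ∈ T ∧ t ≠ s ∧ (t ∩ s).Nonempty

/-- A partial Steiner triple system is cyclic if the graph whose vertices are its
triples, two joined when they meet, is a cycle (equivalently: it has at least three
triples, every triple meets exactly two others, and the graph is connected). -/
def IsCyclicPSTS {β : Type*} (T : Finset (Finset β)) : Prop :=
  3 ≤ T.card ∧ (∀ t ∈ T, (T.filter fun s => s ≠ t ∧ (s ∩ t).Nonempty).card = 2) ∧
    ∀ t ∈ T, ∀ s ∈ T, Relation.ReflTransGen (TriAdj T) t s

/-- The partial Steiner triple system `Q(z)` (for the parameter `n`), with triple set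
`T`, point set `P` and distinguished point `z`: two cyclic PSTSs `C₁, C₂` on
`2n+4` and `2n+6` points meeting exactly in the point `z`, which lies in two triples
of each, triples `{z, z'_i, z_i}` of `C_i` with `z'_i` in two triples of `C_i`, and a
new point `z'` in the single additional triple `{z'_1, z', z'_2}`. -/
def IsQ {β : Type*} (n : ℕ) (T : Finset (Finset β)) (P : Finset β) (z : β) : Prop :=
  ∃ C₁ C₂ : Finset (Finset β), ∃ z' z₁' z₂' z₁ z₂ : β,
    IsPSTS T ∧ IsCyclicPSTS C₁ ∧ IsCyclicPSTS C₂ ∧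
    (ptsOf C₁).card = 2 * n + 4 ∧ (ptsOf C₂).card = 2 * n + 6 ∧
    ptsOf C₁ ∩ ptsOf C₂ = {z} ∧
    (C₁.filter fun t => z ∈ t).card = 2 ∧ (C₂.filter fun t => z ∈ t).card = 2 ∧
    ({z, z₁', z₁} : Finset β) ∈ C₁ ∧ (C₁.filter fun t => z₁' ∈ t).card = 2 ∧
    ({z, z₂', z₂} : Finset β) ∈ C₂ ∧ (C₂.filter fun t => z₂' ∈ t).card = 2 ∧
    z' ∉ ptsOf C₁ ∪ ptsOf C₂ ∧
    T = C₁ ∪ C₂ ∪ {({z₁', z', z₂'} : Finset β)} ∧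
    P = ptsOf C₁ ∪ ptsOf C₂ ∪ {z'}

/-- Nonempty subsets of `β`: the points of the projective space `P` over `GF(2)`
built on a point set `β`. -/
abbrev NESet (β : Type*) := {s : Finset β // s.Nonempty}

/-- The triples of the projective space over `GF(2)` on the nonempty subsets of `β`:
3-sets of subsets with empty symmetric difference. -/
def sdTriples (β : Type*) [Fintype β] : Finset (Finset (NESet β)) :=
  Finset.univ.filter fun t : Finset (NESet β) =>
    ∃ a b c : NESet β, a ≠ b ∧ a ≠ c ∧ b ≠ c ∧ t = {a, b, c} ∧
      symmDiff (symmDiff a.1 b.1) c.1 = ∅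

/-- The singleton `{a}` as a point of the projective space. -/
def sEl {β : Type*} (a : β) : NESet β := ⟨{a}, Finset.singleton_nonempty a⟩

/-- The pair `{a,b}` as a point of the projective space. -/
def pEl {β : Type*} (a b : β) : NESet β := ⟨{a, b}, Finset.insert_nonempty a {b}⟩

/-- The triples of `P` removed in Cameron's construction, for each triple `{a,b,c}`
of `V'`. -/
def removedTriples {β : Type*} [Fintype β] (TV' : Finset (Finset β)) :
    Finset (Finset (NESet β)) :=
  Finset.univ.filter fun t : Finset (NESet β) =>
    ∃ a b c : β, ({a, b, c} : Finset β) ∈ TV' ∧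
      (t = {pEl a b, pEl a c, pEl b c} ∨ t = {sEl a, sEl b, pEl a b} ∨
       t = {sEl a, sEl c, pEl a c} ∨ t = {sEl b, sEl c, pEl b c})

/-- The new triples of Cameron's construction, for each triple `{a,b,c}` of `V'`. -/
def addedTriples {β : Type*} [Fintype β] (TV' : Finset (Finset β)) :
    Finset (Finset (NESet β)) :=
  Finset.univ.filter fun t : Finset (NESet β) =>
    ∃ a b c : β, ({a, b, c} : Finset β) ∈ TV' ∧
      (t = {sEl a, sEl b, sEl c} ∨ t = {sEl a, pEl a b, pEl a c} ∨
       t = {sEl b, pEl a b, pEl b c} ∨ t = {sEl c, pEl a c, pEl b c})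

/-- The Steiner triple system `U` of Cameron's construction obtained from the
projective space `P` and the partial system `V'`. -/
def CameronSTS {β : Type*} [Fintype β] (TV' : Finset (Finset β)) :
    Finset (Finset (NESet β)) :=
  (sdTriples β \ removedTriples TV') ∪ addedTriples TV'

/-- A Steiner quasigroup: the algebraic form of a Steiner triple system, where `op a b` is the
third point of the triple through `a ≠ b` and `op a a = a`. -/
structure SteinerQuasigroup (P : Type*) where
  op : P → P → P
  idem : ∀ a, op a a = a
  comm : ∀ a b, op a b = op b a
  inv : ∀ a b, op a (op a b) = b

namespace SteinerQuasigroup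

variable {P : Type*}

/-- `g` is an isomorphism of Steiner quasigroups when bijective. -/
def IsHom {Q : Type*} (S : SteinerQuasigroup P) (S' : SteinerQuasigroup Q) (g : P → Q) : Prop :=
  ∀ a b, g (S.op a b) = S'.op (g a) (g b)

variable (S : SteinerQuasigroup P)

lemma inv_right (a b : P) : S.op (S.op a b) b = a := by
  rw [S.comm, S.comm a b, S.inv]

lemma op_injective (a : P) : Function.Injective (S.op a) := fun b c h => by
  rw [← S.inv a b, h, S.inv]

lemma op_eq_left {a b : P} : S.op a b = a ↔ b = a := by
  constructor
  · intro h
    rw [← S.inv a b, h, S.idem]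
  · rintro rfl
    exact S.idem _

lemma op_eq_right {a b : P} : S.op a b = b ↔ a = b := by
  rw [S.comm, S.op_eq_left]

/-- A proper subsystem `Z` of a subsystem `Y` satisfies `2 |Z| + 1 ≤ |Y|`. -/
lemma two_mul_card_lt {Z Y : Finset P} (hZ : ∀ a ∈ Z, ∀ b ∈ Z, S.op a b ∈ Z)
    (hY : ∀ a ∈ Y, ∀ b ∈ Y, S.op a b ∈ Y) (hZY : Z ⊂ Y) : 2 * Z.card + 1 ≤ Y.card := by
  obtain ⟨p, hpY, hpZ⟩ := Finset.exists_of_ssubset hZY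
  have hsub := hZY.1
  have hout : ∀ a ∈ Z, S.op p a ∉ Z := fun a ha h => hpZ (by
    rw [← S.inv a p, S.comm a p]
    exact hZ _ ha _ h)
  have hd : Disjoint Z (Z.image (S.op p)) := by
    rw [Finset.disjoint_right]
    intro b hb
    obtain ⟨a, ha, rfl⟩ := Finset.mem_image.mp hb
    exact hout a ha
  have hp : p ∉ Z ∪ Z.image (S.op p) := by
    simp only [Finset.mem_union, Finset.mem_image, not_or, not_exists, not_and]
    refine ⟨hpZ, fun a ha h => hpZ ?_⟩
    rw [S.op_eq_left] at h
    rwa [← h]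
  have hle : insert p (Z ∪ Z.image (S.op p)) ⊆ Y := by
    intro b hb
    simp only [Finset.mem_insert, Finset.mem_union, Finset.mem_image] at hb
    rcases hb with rfl | hb | ⟨a, ha, rfl⟩
    · exact hpY
    · exact hsub hb
    · exact hY _ hpY _ (hsub ha)
  have := Finset.card_le_card hle
  rw [Finset.card_insert_of_notMem hp, Finset.card_union_of_disjoint hd,
    Finset.card_image_of_injective _ (S.op_injective p)] at this
  omega

/-- Two homomorphisms that agree on more than half of the points are equal. -/
lemma IsHom.eq_of_card [Fintype P] {S S' : SteinerQuasigroup P} {f g : P → P}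
    (hf : S.IsHom S' f) (hg : S.IsHom S' g)
    (h : Fintype.card P < 2 * (univ.filter fun a => f a = g a).card + 1) : f = g := by
  by_contra hne
  have := S.two_mul_card_lt (Z := univ.filter fun a => f a = g a) (Y := univ)
    (by
      intro a ha b hb
      simp only [Finset.mem_filter, Finset.mem_univ, true_and] at *
      rw [hf, hg, ha, hb])
    (by simp)
    (by
      rw [Finset.ssubset_univ_iff]
      intro he
      apply hne
      funext a
      simpa using Finset.ext_iff.mp he a)
  rw [Finset.card_univ] at this
  omega

lemma IsHom.symm {Q : Type*} {S : SteinerQuasigroup P} {S' : SteinerQuasigroup Q} {g : P ≃ Q}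
    (hg : S.IsHom S' g) : S'.IsHom S g.symm := by
  intro a b
  apply g.injective
  rw [hg]
  simp

/-- The points lying in a quadrangle (or on a closed walk of length four) of the graph in which
each point is joined to its images under `p` and `q`. -/
def quads [Fintype P] (p q : P) : Finset P :=
  univ.filter fun r => S.op q (S.op p (S.op q (S.op p r))) = r

/-- The points that form at least `k` quadrangles together with `p`. -/
def heavy [Fintype P] (k : ℕ) (p : P) : Finset P :=
  univ.filter fun q => k ≤ (S.quads p q).card

variable {S}

lemma IsHom.card_quads [Fintype P] {g : Equiv.Perm P} (hg : S.IsHom S g) (p q : P) :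
    (S.quads (g p) (g q)).card = (S.quads p q).card := by
  rw [← Finset.card_map (s := S.quads p q) g.toEmbedding]
  congr 1
  ext r
  obtain ⟨r, rfl⟩ := g.surjective r
  simp [quads, ← hg _ _]

lemma IsHom.card_heavy [Fintype P] {g : Equiv.Perm P} (hg : S.IsHom S g) (k : ℕ) (p : P) :
    (S.heavy k (g p)).card = (S.heavy k p).card := by
  rw [← Finset.card_map (s := S.heavy k p) g.toEmbedding]
  congr 1
  ext r
  obtain ⟨r, rfl⟩ := g.surjective r
  simp [heavy, hg.card_quads]

/-- Transport of structure along a bijection. -/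
def map {Q : Type*} (S : SteinerQuasigroup P) (e : P ≃ Q) : SteinerQuasigroup Q where
  op a b := e (S.op (e.symm a) (e.symm b))
  idem a := by simp [S.idem]
  comm a b := by rw [S.comm]
  inv a b := by simp [S.inv]

lemma isHom_map {Q : Type*} (S : SteinerQuasigroup P) (e : P ≃ Q) : S.IsHom (S.map e) e := by
  intro a b
  simp [map]

end SteinerQuasigroup

namespace SteinerQuasigroup

variable {X A α : Type*}

/-- The embedding of `X ∪ A` as `X ∪ ({v} × A)`. -/
def fiberMap (v : α) : X ⊕ A → X ⊕ α × A := Sum.map id (Prod.mk v)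

/-- The fiber containing a point of `X ∪ (V × A)`, if it is not in `X`. -/
def fiber : X ⊕ α × A → Option α
  | .inl _ => none
  | .inr p => some p.1

lemma fiberMap_inr (v : α) (a : A) : (fiberMap v (.inr a) : X ⊕ α × A) = .inr (v, a) := rfl

lemma fiberMap_injective (v : α) : Function.Injective (fiberMap v : X ⊕ A → X ⊕ α × A) :=
  Sum.map_injective.mpr ⟨Function.injective_id, Prod.mk_right_injective v⟩

/-- Two points are in a common `X ∪ ({v} × A)` or in different fibers. -/
lemma fiber_cases [Nonempty α] (p q : X ⊕ α × A) :
    (∃ v p' q', p = fiberMap v p' ∧ q = fiberMap v q') ∨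
      ∃ v w a b, v ≠ w ∧ p = .inr (v, a) ∧ q = .inr (w, b) := by
  rcases p with x | ⟨v, a⟩ <;> rcases q with y | ⟨w, b⟩
  · exact .inl ⟨Classical.arbitrary α, .inl x, .inl y, rfl, rfl⟩
  · exact .inl ⟨w, .inl x, .inr b, rfl, rfl⟩
  · exact .inl ⟨v, .inr a, .inl y, rfl, rfl⟩
  · by_cases h : v = w
    · subst h
      exact .inl ⟨v, .inr a, .inr b, rfl, rfl⟩
    · exact .inr ⟨v, w, a, b, h, rfl, rfl⟩

lemma card_filter_fiber_none_le [Fintype X] [Fintype (X ⊕ α × A)] {f : X ⊕ α × A → X ⊕ α × A}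
    (hf : Function.Injective f) :
    (univ.filter fun r => fiber (f r) = none).card ≤ Fintype.card X := by
  rw [← Finset.card_image_of_injective _ hf, ← Finset.card_univ (α := X),
    ← Finset.card_map (s := (univ : Finset X)) (Function.Embedding.inl (β := α × A))]
  apply Finset.card_le_card
  intro r hr
  obtain ⟨s, hs, rfl⟩ := Finset.mem_image.mp hr
  simp only [Finset.mem_filter, Finset.mem_univ, true_and] at hs
  revert hs
  rcases f s with x | z
  · simp
  · simp [fiber]

variable [AddCommGroup A]

/-- The operation of Moore's construction on `X ∪ (V × A)`: the systems `Y v` on `X ∪ A` are placed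
on `X ∪ ({v} × A)`, and points over different `v` are completed by `a + b + c = 0`. -/
def mooreOp (V : SteinerQuasigroup α) (B : SteinerQuasigroup X) (π : X → A → A)
    (Y : α → SteinerQuasigroup (X ⊕ A)) : X ⊕ α × A → X ⊕ α × A → X ⊕ α × A
  | .inl x, .inl y => .inl (B.op x y)
  | .inl x, .inr (v, a) => .inr (v, π x a)
  | .inr (v, a), .inl x => .inr (v, π x a)
  | .inr (v, a), .inr (w, b) =>
    if v = w then Sum.map id (Prod.mk v) ((Y v).op (.inr a) (.inr b))
    else .inr (V.op v w, - a - b)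

/-- The data of Moore's construction: `Y v` extends `B` by the points of `A`, and `x` acts on `A`
as `π x` in every `Y v`. -/
structure IsMooreFamily (B : SteinerQuasigroup X) (π : X → A → A)
    (Y : α → SteinerQuasigroup (X ⊕ A)) : Prop where
  base : ∀ v x y, (Y v).op (.inl x) (.inl y) = .inl (B.op x y)
  act : ∀ v x a, (Y v).op (.inl x) (.inr a) = .inr (π x a)

variable {V : SteinerQuasigroup α} {B : SteinerQuasigroup X} {π : X → A → A}
  {Y : α → SteinerQuasigroup (X ⊕ A)}

lemma mooreOp_fiberMap (hY : IsMooreFamily B π Y) (v : α) (p q : X ⊕ A) :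
    mooreOp V B π Y (fiberMap v p) (fiberMap v q) = fiberMap v ((Y v).op p q) := by
  rcases p with x | a <;> rcases q with y | b
  · simp [mooreOp, fiberMap, hY.base]
  · simp [mooreOp, fiberMap, hY.act]
  · simp [mooreOp, fiberMap, (Y v).comm (.inr a), hY.act]
  · simp [mooreOp, fiberMap]

lemma mooreOp_of_ne {v w : α} (h : v ≠ w) (a b : A) :
    mooreOp V B π Y (.inr (v, a)) (.inr (w, b)) = .inr (V.op v w, - a - b) := by
  simp [mooreOp, h]

/-- Moore's construction. -/
def moore [Nonempty α] (V : SteinerQuasigroup α) (hY : IsMooreFamily B π Y) :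
    SteinerQuasigroup (X ⊕ α × A) where
  op := mooreOp V B π Y
  idem p := by
    rcases p with x | ⟨v, a⟩
    · simp [mooreOp, B.idem]
    · rw [← fiberMap_inr, mooreOp_fiberMap hY, (Y v).idem]
  comm p q := by
    rcases fiber_cases p q with ⟨v, p, q, rfl, rfl⟩ | ⟨v, w, a, b, h, rfl, rfl⟩
    · rw [mooreOp_fiberMap hY, mooreOp_fiberMap hY, (Y v).comm]
    · rw [mooreOp_of_ne h, mooreOp_of_ne h.symm, V.comm]
      congr 2
      abel
  inv p q := by
    rcases fiber_cases p q with ⟨v, p, q, rfl, rfl⟩ | ⟨v, w, a, b, h, rfl, rfl⟩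
    · rw [mooreOp_fiberMap hY, mooreOp_fiberMap hY, (Y v).inv]
    · rw [mooreOp_of_ne h, mooreOp_of_ne, V.inv]
      · congr 2
        abel
      · intro he
        exact h ((V.op_eq_left.mp he.symm).symm)

section Automorphisms

variable [Nonempty α] (hY : IsMooreFamily B π Y)

lemma moore_fiberMap (v : α) (p q : X ⊕ A) :
    (moore V hY).op (fiberMap v p) (fiberMap v q) = fiberMap v ((Y v).op p q) :=
  mooreOp_fiberMap hY v p q

lemma moore_of_ne {v w : α} (h : v ≠ w) (a b : A) :
    (moore V hY).op (.inr (v, a)) (.inr (w, b)) = .inr (V.op v w, - a - b) :=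
  mooreOp_of_ne (B := B) (π := π) (Y := Y) h a b

lemma moore_inl_inr (x : X) (v : α) (a : A) :
    (moore V hY).op (.inl x) (.inr (v, a)) = .inr (v, π x a) := rfl

lemma fiber_moore_of_ne {v z : α} {a : A} {r : X ⊕ α × A} (hr : fiber r = some z) (h : v ≠ z) :
    fiber ((moore V hY).op (.inr (v, a)) r) = some (V.op v z) := by
  rcases r with x | ⟨z', b⟩
  · simp [fiber] at hr
  · obtain rfl : z' = z := by simpa [fiber] using hr
    rw [moore_of_ne hY h]
    rfl

lemma fiber_moore_self {v : α} {a : A} {r : X ⊕ α × A} (hr : fiber r = some v)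
    (h : fiber ((moore V hY).op (.inr (v, a)) r) ≠ none) :
    fiber ((moore V hY).op (.inr (v, a)) r) = some v := by
  rcases r with x | ⟨z', b⟩
  · simp [fiber] at hr
  · obtain rfl : z' = v := by simpa [fiber] using hr
    rw [← fiberMap_inr, ← fiberMap_inr, moore_fiberMap hY] at h ⊢
    generalize (Y z').op (.inr a) (.inr b) = s at h ⊢
    rcases s with x | c
    · exact absurd rfl h
    · rfl

variable [Fintype α] [Fintype A] [Fintype X]

lemma card_quads_ge {p q : X ⊕ α × A} (v : α)
    (h : ∀ z c, z ≠ v → (.inr (z, c) : X ⊕ α × A) ∈ (moore V hY).quads p q) :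
    (Fintype.card α - 1) * Fintype.card A ≤ ((moore V hY).quads p q).card := by
  have : (((univ.erase v) ×ˢ (univ : Finset A)).map Function.Embedding.inr :
      Finset (X ⊕ α × A)) ⊆ (moore V hY).quads p q := by
    intro r hr
    simp only [Finset.mem_map, Finset.mem_product, Finset.mem_erase] at hr
    obtain ⟨⟨z, c⟩, hz, rfl⟩ := hr
    exact h z c hz.1.1
  have := Finset.card_le_card this
  rwa [Finset.card_map, Finset.card_product, Finset.card_erase_of_mem (Finset.mem_univ v),
    Finset.card_univ, Finset.card_univ] at this

/-- A point of `X` and a suitable point of a fiber lie in many quadrangles. -/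
lemma card_quads_base {a : A} {x : X} (ha : ∀ c, π x (- a - π x c) = - a - c) (v : α) :
    (Fintype.card α - 1) * Fintype.card A ≤
      ((moore V hY).quads (.inl x) (.inr (v, a))).card := by
  refine card_quads_ge hY v fun z c hz => ?_
  have h1 : v ≠ V.op v z := fun h => hz (V.op_eq_left.mp h.symm)
  simp only [quads, Finset.mem_filter, Finset.mem_univ, true_and]
  rw [moore_inl_inr, moore_of_ne hY hz.symm, moore_inl_inr, moore_of_ne hY h1, V.inv, ha]
  congr 2
  abel

lemma card_quads_same_fiber_le {v : α} {a b : A} (hab : (a - b) + (a - b) ≠ 0) :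
    ((moore V hY).quads (.inr (v, a)) (.inr (v, b))).card ≤
      Fintype.card X + Fintype.card A := by
  have : (moore V hY).quads (.inr (v, a)) (.inr (v, b)) ⊆ univ.image (fiberMap v) := by
    intro r hr
    rcases r with x | ⟨z, c⟩
    · exact Finset.mem_image.mpr ⟨.inl x, Finset.mem_univ _, rfl⟩
    · by_cases hz : z = v
      · subst hz
        exact Finset.mem_image.mpr ⟨.inr c, Finset.mem_univ _, rfl⟩
      · exfalso
        have h1 : v ≠ V.op v z := fun h => hz (V.op_eq_left.mp h.symm)
        simp only [quads, Finset.mem_filter, Finset.mem_univ, true_and] at hr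
        rw [moore_of_ne hY (Ne.symm hz), moore_of_ne hY h1, V.inv, moore_of_ne hY (Ne.symm hz),
          moore_of_ne hY h1, V.inv] at hr
        simp only [Sum.inr.injEq, Prod.mk.injEq, true_and] at hr
        apply hab
        rw [← sub_eq_zero] at hr
        rw [← hr]
        abel
  refine (Finset.card_le_card this).trans (Finset.card_image_le.trans ?_)
  rw [Finset.card_univ, Fintype.card_sum]

lemma card_quads_ne_fiber_le {v z : α} (hvz : v ≠ z) (a b : A) :
    ((moore V hY).quads (.inr (v, a)) (.inr (z, b))).card ≤
      (Fintype.card α - 3) * Fintype.card A + 4 * Fintype.card X := by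
  set p : X ⊕ α × A := .inr (v, a) with hp
  set q : X ⊕ α × A := .inr (z, b) with hq
  set M := moore V hY with hM
  have hv1 : V.op v z ≠ v := fun h => hvz (V.op_eq_left.mp h).symm
  have hz1 : V.op v z ≠ z := fun h => hvz (V.op_eq_right.mp h)
  have hvv : V.op v (V.op v z) = z := V.inv v z
  have hzv : V.op z (V.op v z) = v := by rw [V.comm v z, V.inv]
  have hzv' : V.op z v = V.op v z := V.comm z v
  have hsub : M.quads p q ⊆
      ((univ \ {v, z, V.op v z}) ×ˢ (univ : Finset A)).map Function.Embedding.inr ∪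
        ((univ.filter fun r => fiber (id r) = none) ∪
        (univ.filter fun r => fiber (M.op p r) = none) ∪
        (univ.filter fun r => fiber ((M.op q ∘ M.op p) r) = none) ∪
        (univ.filter fun r => fiber ((M.op p ∘ M.op q ∘ M.op p) r) = none)) := by
    intro r hr
    simp only [quads, Finset.mem_filter, Finset.mem_univ, true_and] at hr
    simp only [Finset.mem_union, Finset.mem_filter, Finset.mem_univ, true_and,
      Function.comp_apply, id]
    by_contra hcon
    simp only [not_or] at hcon
    obtain ⟨h0, ⟨⟨n0, n1⟩, n2⟩, n3⟩ := hcon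
    obtain ⟨y, hy⟩ := Option.ne_none_iff_exists'.mp n0
    have hy3 : y = v ∨ y = z ∨ y = V.op v z := by
      by_contra hy3
      apply h0
      rcases r with x | ⟨y', c⟩
      · simp [fiber] at hy
      · obtain rfl : y' = y := by simpa [fiber] using hy
        simpa using hy3
    rcases hy3 with h | h | h <;> rw [h] at hy
    · have f1 := fiber_moore_self hY hy n1
      have f2 := fiber_moore_of_ne (V := V) hY (a := b) f1 hvz.symm
      rw [hzv'] at f2
      have f3 := fiber_moore_of_ne (V := V) hY (a := a) f2 hv1.symm
      rw [hvv] at f3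
      by_cases h4 : fiber (M.op q (M.op p (M.op q (M.op p r)))) = none
      · rw [hr] at h4
        exact n0 h4
      · have f4 := fiber_moore_self hY f3 h4
        rw [← hM, ← hp, ← hq, hr, hy] at f4
        exact hvz (Option.some.inj f4)
    · have f1 := fiber_moore_of_ne (V := V) hY (a := a) hy hvz
      have f2 := fiber_moore_of_ne (V := V) hY (a := b) f1 hz1.symm
      rw [hzv] at f2
      have f3 := fiber_moore_self hY f2 n3
      have f4 := fiber_moore_of_ne (V := V) hY (a := b) f3 hvz.symm
      rw [← hM, ← hp, ← hq, hr, hy, hzv'] at f4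
      exact hz1 (Option.some.inj f4).symm
    · have f1 := fiber_moore_of_ne (V := V) hY (a := a) hy hv1.symm
      rw [hvv] at f1
      have f2 := fiber_moore_self hY f1 n2
      have f3 := fiber_moore_of_ne (V := V) hY (a := a) f2 hvz
      have f4 := fiber_moore_of_ne (V := V) hY (a := b) f3 hz1.symm
      rw [← hM, ← hp, ← hq, hr, hy, hzv] at f4
      exact hv1 (Option.some.inj f4)
  have hc0 := card_filter_fiber_none_le (X := X) (A := A) (α := α) Function.injective_id
  have hc1 := card_filter_fiber_none_le (M.op_injective p)
  have hc2 := card_filter_fiber_none_le ((M.op_injective q).comp (M.op_injective p))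
  have hc3 := card_filter_fiber_none_le
    ((M.op_injective p).comp ((M.op_injective q).comp (M.op_injective p)))
  have hcard : (univ \ {v, z, V.op v z} : Finset α).card = Fintype.card α - 3 := by
    rw [Finset.card_sdiff_of_subset (Finset.subset_univ _), Finset.card_univ,
      Finset.card_eq_three.mpr ⟨v, z, V.op v z, hvz, hv1.symm, hz1.symm, rfl⟩]
  refine (Finset.card_le_card hsub).trans ((Finset.card_union_le _ _).trans ?_)
  rw [Finset.card_map, Finset.card_product, hcard, Finset.card_univ]
  have e1 := Finset.card_union_le ((univ.filter fun r => fiber (id r) = none) ∪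
        (univ.filter fun r => fiber (M.op p r) = none) ∪
        (univ.filter fun r => fiber ((M.op q ∘ M.op p) r) = none))
        (univ.filter fun r => fiber ((M.op p ∘ M.op q ∘ M.op p) r) = none)
  have e2 := Finset.card_union_le ((univ.filter fun r => fiber (id r) = none) ∪
        (univ.filter fun r => fiber (M.op p r) = none))
        (univ.filter fun r => fiber ((M.op q ∘ M.op p) r) = none)
  have e3 := Finset.card_union_le (univ.filter fun r => fiber (id r) = none)
        (univ.filter fun r => fiber (M.op p r) = none)
  omega

end Automorphisms
end SteinerQuasigroup

namespace SteinerQuasigroup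

variable {X A α : Type*} [AddCommGroup A] [Nonempty α] [Fintype α] [Fintype A] [Fintype X]
  {V : SteinerQuasigroup α} {B : SteinerQuasigroup X} {π : X → A → A}
  {Y : α → SteinerQuasigroup (X ⊕ A)}

/-- The numerical conditions under which the points of `X` can be recognised in Moore's
construction. -/
structure IsMooreRange (α : Type*) [Fintype α] (π : X → A → A) : Prop where
  seven_le : 7 ≤ Fintype.card α
  lower : Fintype.card A < 3 * Fintype.card X + 3
  upper : 2 * Fintype.card X < Fintype.card A
  torsion : ∀ T : Finset A, (∀ d ∈ T, d + d = 0) → T.card ≤ 2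
  reflect : ∃ R : Finset A, (∀ a ∈ R, ∀ x c, π x (- a - π x c) = - a - c) ∧
    Fintype.card X + 2 < Fintype.card α * R.card

lemma card_heavy_inl_ge (hY : IsMooreFamily B π Y) {R : Finset A} {x : X}
    (hR : ∀ a ∈ R, ∀ c, π x (- a - π x c) = - a - c) :
    Fintype.card α * R.card ≤
      ((moore V hY).heavy ((Fintype.card α - 1) * Fintype.card A) (.inl x)).card := by
  rw [← Finset.card_univ (α := α), ← Finset.card_product,
    ← Finset.card_map (Function.Embedding.inr (α := X))]
  apply Finset.card_le_card
  intro r hr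
  simp only [Finset.mem_map, Finset.mem_product, Finset.mem_univ, true_and] at hr
  obtain ⟨⟨v, a⟩, ha, rfl⟩ := hr
  simp only [heavy, Finset.mem_filter, Finset.mem_univ, true_and]
  exact card_quads_base hY (hR a ha) v

lemma card_heavy_inr_le (hY : IsMooreFamily B π Y) (h : IsMooreRange α π) (v : α) (a : A) :
    ((moore V hY).heavy ((Fintype.card α - 1) * Fintype.card A) (.inr (v, a))).card ≤
      Fintype.card X + 2 := by
  have hn := h.upper
  have hv := h.seven_le
  have hsub : (moore V hY).heavy ((Fintype.card α - 1) * Fintype.card A) (.inr (v, a)) ⊆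
      (univ : Finset X).map Function.Embedding.inl ∪
        (univ.filter fun d : A => d + d = 0).image fun d => .inr (v, a - d) := by
    intro r hr
    simp only [heavy, Finset.mem_filter, Finset.mem_univ, true_and] at hr
    simp only [Finset.mem_union, Finset.mem_map, Finset.mem_univ, true_and, Finset.mem_image,
      Finset.mem_filter]
    rcases r with x | ⟨z, b⟩
    · exact .inl ⟨x, rfl⟩
    · right
      obtain ⟨m, hm⟩ := Nat.exists_eq_add_of_le hv
      by_cases hz : v = z
      · subst hz
        refine ⟨a - b, ?_, by simp⟩
        by_contra hab
        have := hr.trans (card_quads_same_fiber_le hY hab)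
        rw [hm, show 7 + m - 1 = 6 + m by omega, add_mul] at this
        nlinarith [Nat.zero_le (m * Fintype.card A)]
      · exfalso
        have := hr.trans (card_quads_ne_fiber_le hY hz a b)
        rw [hm, show 7 + m - 1 = 6 + m by omega, show 7 + m - 3 = 4 + m by omega, add_mul,
          add_mul] at this
        omega
  refine (Finset.card_le_card hsub).trans ((Finset.card_union_le _ _).trans ?_)
  rw [Finset.card_map, Finset.card_univ]
  exact Nat.add_le_add_left (Finset.card_image_le.trans (h.torsion _ (by simp))) _

lemma moore_aut_inl (hY : IsMooreFamily B π Y) (h : IsMooreRange α π)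
    {F : Equiv.Perm (X ⊕ α × A)} (hF : (moore V hY).IsHom (moore V hY) F) (x : X) :
    ∃ y, F (.inl x) = .inl y := by
  rcases hx : F (.inl x) with y | ⟨v, a⟩
  · exact ⟨y, rfl⟩
  · exfalso
    have h1 := hF.card_heavy ((Fintype.card α - 1) * Fintype.card A) (.inl x)
    rw [hx] at h1
    obtain ⟨R, hR, h4⟩ := h.reflect
    have h2 := card_heavy_inl_ge (V := V) hY fun a ha => hR a ha x
    have h3 := card_heavy_inr_le (V := V) hY h v a
    omega

lemma moore_aut_inr (hY : IsMooreFamily B π Y) (h : IsMooreRange α π)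
    {F : Equiv.Perm (X ⊕ α × A)} (hF : (moore V hY).IsHom (moore V hY) F) (p : α × A) :
    ∃ q, F (.inr p) = .inr q := by
  rcases hx : F (.inr p) with y | q
  · exfalso
    obtain ⟨z, hz⟩ := moore_aut_inl hY h hF.symm y
    rw [← hx, Equiv.symm_apply_apply] at hz
    simp at hz
  · exact ⟨q, rfl⟩

lemma moore_aut_fiber (hY : IsMooreFamily B π Y) (h : IsMooreRange α π)
    {F : Equiv.Perm (X ⊕ α × A)} (hF : (moore V hY).IsHom (moore V hY) F) (v : α) :
    ∃ z, ∀ a, ∃ b, F (.inr (v, a)) = .inr (z, b) := by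
  obtain ⟨⟨z, b⟩, hz⟩ := moore_aut_inr hY h hF (v, 0)
  refine ⟨z, ?_⟩
  set M := moore V hY
  set Yv : Finset (X ⊕ α × A) := univ.image (fiberMap v)
  set Z : Finset (X ⊕ α × A) := Yv.filter fun p => ∃ q, F p = fiberMap z q
  set X' : Finset (X ⊕ α × A) := univ.image .inl
  have hYv : ∀ p ∈ Yv, ∀ q ∈ Yv, M.op p q ∈ Yv := by
    intro p hp q hq
    obtain ⟨p, -, rfl⟩ := Finset.mem_image.mp hp
    obtain ⟨q, -, rfl⟩ := Finset.mem_image.mp hq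
    rw [moore_fiberMap hY]
    exact Finset.mem_image_of_mem _ (Finset.mem_univ _)
  have hZ : ∀ p ∈ Z, ∀ q ∈ Z, M.op p q ∈ Z := by
    intro p hp q hq
    obtain ⟨hp, p', hp'⟩ := Finset.mem_filter.mp hp
    obtain ⟨hq, q', hq'⟩ := Finset.mem_filter.mp hq
    refine Finset.mem_filter.mpr ⟨hYv p hp q hq, (Y z).op p' q', ?_⟩
    rw [hF, hp', hq', moore_fiberMap hY]
  have hX' : ∀ p ∈ X', ∀ q ∈ X', M.op p q ∈ X' := by
    intro p hp q hq
    obtain ⟨p, -, rfl⟩ := Finset.mem_image.mp hp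
    obtain ⟨q, -, rfl⟩ := Finset.mem_image.mp hq
    exact Finset.mem_image_of_mem _ (Finset.mem_univ (B.op p q))
  have hXZ : X' ⊂ Z := by
    refine (Finset.ssubset_iff_of_subset ?_).mpr ⟨.inr (v, 0), ?_, ?_⟩
    · intro p hp
      obtain ⟨p, -, rfl⟩ := Finset.mem_image.mp hp
      obtain ⟨y, hy⟩ := moore_aut_inl hY h hF p
      exact Finset.mem_filter.mpr ⟨Finset.mem_image.mpr ⟨.inl p, Finset.mem_univ _, rfl⟩,
        .inl y, hy⟩
    · exact Finset.mem_filter.mpr ⟨Finset.mem_image.mpr ⟨.inr 0, Finset.mem_univ _, rfl⟩,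
        .inr b, hz⟩
    · simp [X']
  have hcX := M.two_mul_card_lt hX' hZ hXZ
  have hcX' : X'.card = Fintype.card X := by
    rw [Finset.card_image_of_injective _ Sum.inl_injective, Finset.card_univ]
  have hcY : Yv.card = Fintype.card X + Fintype.card A := by
    rw [Finset.card_image_of_injective _ (fiberMap_injective v), Finset.card_univ,
      Fintype.card_sum]
  have hZY : Z = Yv := by
    by_contra hne
    have := M.two_mul_card_lt hZ hYv ((Finset.filter_subset _ _).ssubset_of_ne hne)
    have := h.lower
    omega
  intro a
  have ha : (.inr (v, a) : X ⊕ α × A) ∈ Z := by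
    rw [hZY]
    exact Finset.mem_image.mpr ⟨.inr a, Finset.mem_univ _, rfl⟩
  obtain ⟨q, hq⟩ := (Finset.mem_filter.mp ha).2
  obtain ⟨r, hr⟩ := moore_aut_inr hY h hF (v, a)
  rcases q with x | c
  · rw [hr] at hq
    simp [fiberMap] at hq
  · exact ⟨c, hq⟩

/-- A family of maps respecting `a + b + c = 0` is affine with a common linear part. -/
lemma exists_affine {β C : Type*} [Fintype β] [AddCommGroup C] {V : SteinerQuasigroup β}
    (hβ : 2 ≤ Fintype.card β) {f : β → C → C}
    (hf : ∀ v z, v ≠ z → ∀ a b, f (V.op v z) (- a - b) = - f v a - f z b) :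
    ∃ (φ : C →+ C) (t : β → C), ∀ v a, f v a = φ a + t v := by
  have : Nontrivial β := Fintype.one_lt_card_iff_nontrivial.mp hβ
  have key : ∀ v z, v ≠ z → ∀ a b, f v a + f z b = f v (a + b) + f z 0 := by
    intro v z h a b
    have h1 := hf v z h a b
    have h2 := hf v z h (a + b) 0
    rw [show - (a + b) - 0 = - a - b by abel, h1] at h2
    have h3 : -(f v a + f z b) = -(f v (a + b) + f z 0) := by
      rw [neg_add', neg_add', h2]
    exact neg_injective h3
  have key2 : ∀ v z, v ≠ z → ∀ b, f z b - f z 0 = f v b - f v 0 := by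
    intro v z h b
    have := key v z h 0 b
    rw [zero_add] at this
    rw [sub_eq_sub_iff_add_eq_add, add_comm (f z b), this]
  obtain ⟨v, z, hvz⟩ := exists_pair_ne β
  refine ⟨AddMonoidHom.mk' (fun a => f v a - f v 0) ?_, fun y => f y 0, ?_⟩
  · intro a b
    rw [← key2 v z hvz b, sub_add_sub_comm, key v z hvz a b]
    abel
  · intro y a
    rcases eq_or_ne v y with rfl | h
    · simp
    · simp [← key2 v y h a]

/-- The automorphisms of Moore's construction preserve `X` and the fibers and are affine on the
fibers. -/
theorem moore_aut (hY : IsMooreFamily B π Y) (h : IsMooreRange α π)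
    {F : Equiv.Perm (X ⊕ α × A)} (hF : (moore V hY).IsHom (moore V hY) F) :
    ∃ (k : Equiv.Perm α) (φ : A →+ A) (t : α → A), V.IsHom V k ∧
      ∀ v a, F (.inr (v, a)) = .inr (k v, φ a + t v) := by
  choose k f hkf using moore_aut_fiber hY h hF
  choose k' f' hkf' using moore_aut_fiber hY h hF.symm
  have h1 : ∀ v, k' (k v) = v := by
    intro v
    have h2 : F.symm (F (.inr (v, 0))) = .inr (v, 0) := by simp
    rw [hkf, hkf'] at h2
    exact congrArg Prod.fst (Sum.inr_injective h2)
  have h2 : ∀ v, k (k' v) = v := by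
    intro v
    have h2 : F (F.symm (.inr (v, 0))) = .inr (v, 0) := by simp
    rw [hkf', hkf] at h2
    exact congrArg Prod.fst (Sum.inr_injective h2)
  have hne : ∀ v z, v ≠ z → k v ≠ k z := fun v z hvz he => hvz (by rw [← h1 v, he, h1])
  have key : ∀ v z, v ≠ z → ∀ a b,
      k (V.op v z) = V.op (k v) (k z) ∧ f (V.op v z) (- a - b) = - f v a - f z b := by
    intro v z hvz a b
    have h3 := hF (.inr (v, a)) (.inr (z, b))
    rw [moore_of_ne hY hvz, hkf, hkf, hkf, moore_of_ne hY (hne v z hvz)] at h3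
    exact Prod.mk.inj (Sum.inr_injective h3)
  obtain ⟨φ, t, hφ⟩ := exists_affine (V := V) (f := f) (by have := h.seven_le; omega)
    fun v z hvz a b => (key v z hvz a b).2
  refine ⟨⟨k, k', h1, h2⟩, φ, t, ?_, fun v a => ?_⟩
  · intro v z
    rcases eq_or_ne v z with rfl | hvz
    · simp [V.idem]
    · exact (key v z hvz 0 0).1
  · rw [hkf, hφ]
    rfl

end SteinerQuasigroup

namespace SteinerQuasigroup

/-- The operation of Bose's construction on `R × ZMod 3`, where `h` is the inverse of `2`. -/
def boseOp {R : Type*} [CommRing R] (h : R) (p q : R × ZMod 3) : R × ZMod 3 :=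
  if p.2 = q.2 then
    if p.1 = q.1 then p else (h * (p.1 + q.1), p.2 + 1)
  else if q.2 = p.2 + 1 then
    if p.1 = q.1 then (p.1, p.2 + 2) else (2 * q.1 - p.1, p.2)
  else
    if p.1 = q.1 then (p.1, q.2 + 2) else (2 * p.1 - q.1, q.2)

/-- Bose's construction. -/
def bose {R : Type*} [CommRing R] (h : R) (hh : 2 * h = 1) : SteinerQuasigroup (R × ZMod 3) where
  op := boseOp h
  idem p := by simp [boseOp]
  comm := by
    rintro ⟨a, i⟩ ⟨b, j⟩
    have e1 : ∀ i : ZMod 3, i + 1 ≠ i := by decide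
    have e2 : ∀ i : ZMod 3, i + 2 ≠ i := by decide
    have e3 : ∀ i : ZMod 3, i ≠ i + 1 + 1 := by decide
    have e4 : ∀ i : ZMod 3, i + 2 ≠ i + 1 := by decide
    have e5 : ∀ i : ZMod 3, i + 2 + 1 = i := by decide
    have hj : j = i ∨ j = i + 1 ∨ j = i + 2 := by
      revert i j
      decide
    rcases eq_or_ne a b with rfl | hab
    · rcases hj with rfl | rfl | rfl
      · simp [boseOp]
      · simp [boseOp, e1, (e1 i).symm, e3]
      · simp [boseOp, e2, (e2 i).symm, e4, e5]
    · rcases hj with rfl | rfl | rfl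
      · simp [boseOp, hab, hab.symm, add_comm]
      · simp [boseOp, hab, hab.symm, e1, (e1 i).symm, e3]
      · simp [boseOp, hab, hab.symm, e2, (e2 i).symm, e4, e5]
  inv := by
    rintro ⟨a, i⟩ ⟨b, j⟩
    have e1 : ∀ i : ZMod 3, i + 1 ≠ i := by decide
    have e2 : ∀ i : ZMod 3, i + 2 ≠ i := by decide
    have e4 : ∀ i : ZMod 3, i + 2 ≠ i + 1 := by decide
    have e6 : ∀ i : ZMod 3, i + 2 + 2 = i + 1 := by decide
    have hj : j = i ∨ j = i + 1 ∨ j = i + 2 := by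
      revert i j
      decide
    rcases eq_or_ne a b with rfl | hab
    · rcases hj with rfl | rfl | rfl
      · simp [boseOp]
      · simp [boseOp, (e1 i).symm, (e2 i).symm, e4, e6]
      · simp [boseOp, (e1 i).symm, (e2 i).symm, e4, e6]
    · have n1 : a ≠ h * (a + b) := fun he => hab (by linear_combination 2 * he + (a + b) * hh)
      have n2 : a ≠ 2 * b - a := fun he => hab (by
        linear_combination h * he + (b - a) * hh)
      have n3 : a ≠ 2 * a - b := fun he => hab (by linear_combination -he)
      rcases hj with rfl | rfl | rfl
      · simp only [boseOp, hab, if_true, if_false, n1, (e1 j).symm]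
        congr 1
        linear_combination (a + b) * hh
      · simp only [boseOp, hab, if_true, if_false, n2, (e1 i).symm]
        congr 1
        linear_combination b * hh
      · simp only [boseOp, hab, if_false, n3, (e2 i).symm, e4]
        congr 1
        ring

/-- The operation on the system of order `2 |P| + 1` containing `S`. -/
def doubleOp {P : Type*} (S : SteinerQuasigroup P) :
    Option (P × Bool) → Option (P × Bool) → Option (P × Bool)
  | none, none => none
  | none, some (a, i) => some (a, !i)
  | some (a, i), none => some (a, !i)
  | some (a, i), some (b, j) =>
    if a = b then if i = j then some (a, i) else none else some (S.op a b, xor i j)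

/-- The system of order `2 |P| + 1` containing `S`. -/
def double {P : Type*} (S : SteinerQuasigroup P) : SteinerQuasigroup (Option (P × Bool)) where
  op := S.doubleOp
  idem p := by
    rcases p with _ | ⟨a, i⟩ <;> simp [doubleOp]
  comm p q := by
    rcases p with _ | ⟨a, i⟩ <;> rcases q with _ | ⟨b, j⟩ <;> try rfl
    rcases eq_or_ne a b with rfl | hab
    · rcases eq_or_ne i j with rfl | hij
      · rfl
      · simp [doubleOp, hij, hij.symm]
    · simp [doubleOp, hab, hab.symm, S.comm a b, Bool.xor_comm]
  inv p q := by
    rcases p with _ | ⟨a, i⟩ <;> rcases q with _ | ⟨b, j⟩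
    · rfl
    · simp [doubleOp]
    · simp [doubleOp]
    · rcases eq_or_ne a b with rfl | hab
      · rcases eq_or_ne i j with rfl | hij
        · simp [doubleOp]
        · revert hij
          cases i <;> cases j <;> simp [doubleOp]
      · have h1 : a ≠ S.op a b := fun h => hab (S.op_eq_left.mp h.symm).symm
        simp [doubleOp, hab, h1, S.inv]

lemma nonempty_of_card_mod_six {P : Type*} [Fintype P] (h : Fintype.card P % 6 = 3) :
    Nonempty (SteinerQuasigroup P) := by
  obtain ⟨k, hk⟩ : ∃ k, Fintype.card P = (2 * k + 1) * 3 := ⟨Fintype.card P / 6, by omega⟩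
  have hh : (2 : ZMod (2 * k + 1)) * (k + 1) = 1 := by
    have : ((2 * k + 1 : ℕ) : ZMod (2 * k + 1)) = 0 := ZMod.natCast_self _
    push_cast at this
    linear_combination this
  have e : ZMod (2 * k + 1) × ZMod 3 ≃ P := Fintype.equivOfCardEq (by
    rw [Fintype.card_prod, ZMod.card, ZMod.card, hk])
  exact ⟨(bose _ hh).map e⟩

lemma nonempty_of_card_mod_twelve {P : Type*} [Fintype P] (h : Fintype.card P % 12 = 7) :
    Nonempty (SteinerQuasigroup P) := by
  obtain ⟨S⟩ := nonempty_of_card_mod_six (P := Fin (Fintype.card P / 2)) (by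
    rw [Fintype.card_fin]
    omega)
  have e : Option (Fin (Fintype.card P / 2) × Bool) ≃ P := Fintype.equivOfCardEq (by
    rw [Fintype.card_option, Fintype.card_prod, Fintype.card_fin, Fintype.card_bool]
    omega)
  exact ⟨S.double.map e⟩

end SteinerQuasigroup

namespace SteinerQuasigroup

/-- The direction in which a difference with first coordinate `i` is used at the points with first
coordinate `j`. -/
def forward (i j : ZMod 4) : Bool := if i = 2 then j = 0 ∨ j = 1 else j = 0 ∨ j = 2

lemma forward_neg : ∀ i j : ZMod 4, forward (-i) j = forward i j := by decide

lemma forward_add : ∀ i j : ZMod 4, i ≠ 0 → forward i (j + i) = !forward i j := by decide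

lemma forward_sub : ∀ i j : ZMod 4, i ≠ 0 → forward i (j - i) = !forward i j := by decide

lemma forward_reflect : ∀ i j : ZMod 4, i ≠ 0 → forward i (-1 - j) = !forward i j := by decide

/-- A set of differences in `ZMod 4 × C` covered by the translates of triples `0, d, turn d`. -/
structure DifferenceSet (C : Type*) [AddCommGroup C] where
  carrier : Set (ZMod 4 × C)
  turn : ZMod 4 × C → ZMod 4 × C
  neg_mem : ∀ d ∈ carrier, -d ∈ carrier
  turn_mem : ∀ d ∈ carrier, turn d ∈ carrier
  turn_turn : ∀ d ∈ carrier, turn (turn d) = d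
  turn_neg : ∀ d ∈ carrier, turn (-d) = turn d - d
  fst_ne_zero : ∀ d ∈ carrier, d.1 ≠ 0

variable {C : Type*} [AddCommGroup C] (D : DifferenceSet C)

/-- The differences off the levels and not covered by `D`. -/
abbrev DifferenceSet.Rest := {g : ZMod 4 × C // g.1 ≠ 0 ∧ g ∉ D.carrier}

variable {D}

/-- The involution by which an uncovered difference acts. -/
def shift (g : D.Rest) (p : ZMod 4 × C) : ZMod 4 × C :=
  if forward g.1.1 p.1 then p + g.1 else p - g.1

lemma shift_shift (g : D.Rest) (p : ZMod 4 × C) : shift g (shift g p) = p := by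
  have h := g.2.1
  cases hf : forward g.1.1 p.1
  · simp [shift, hf, forward_sub _ _ h]
  · simp [shift, hf, forward_add _ _ h]

lemma shift_reflect (g : D.Rest) {a : ZMod 4 × C} (ha : a.1 = 1) (c : ZMod 4 × C) :
    shift g (- a - shift g c) = - a - c := by
  have h := g.2.1
  have h1 := forward_reflect g.1.1 c.1 h
  cases hf : forward g.1.1 c.1
  · have h2 : forward g.1.1 (-1 - (c.1 - g.1.1)) = false := by
      rw [sub_sub_eq_add_sub, add_sub_right_comm, forward_add _ _ h, h1, hf]
      rfl
    simp only [shift, hf, Bool.false_eq_true, if_false, Prod.fst_sub, Prod.fst_neg, ha, h2]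
    abel
  · have h2 : forward g.1.1 (-1 - (c.1 + g.1.1)) = true := by
      rw [← sub_sub, forward_sub _ _ h, h1, hf]
      rfl
    simp only [shift, hf, if_true, Prod.fst_sub, Prod.fst_neg, Prod.fst_add, ha, h2]
    abel

variable (D)

/-- The product of two points of `ZMod 4 × C`: pairs in a level are completed by `S`, pairs with
difference in `D` by `D`, and the remaining pairs by their difference. -/
def levelOp (S : ZMod 4 → SteinerQuasigroup C) (p q : ZMod 4 × C) : D.Rest ⊕ ZMod 4 × C :=
  if h : ∃ g : D.Rest, shift g p = q then .inl h.choose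
  else if p.1 = q.1 then .inr (p.1, (S p.1).op p.2 q.2)
  else .inr (p + D.turn (q - p))

lemma exists_shift_iff (p q : ZMod 4 × C) :
    (∃ g : D.Rest, shift g p = q) ↔ p.1 ≠ q.1 ∧ q - p ∉ D.carrier := by
  have key : ∀ d ∉ D.carrier, -d ∉ D.carrier := fun d hd h => hd (by
    simpa using D.neg_mem _ h)
  constructor
  · rintro ⟨g, rfl⟩
    cases hf : forward g.1.1 p.1
    · have h0 : ¬ p.1 = p.1 - g.1.1 := fun h => g.2.1 (sub_eq_self.mp h.symm)
      simpa [shift, hf, h0] using key _ g.2.2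
    · simpa [shift, hf, eq_comm, g.2.1] using g.2.2
  · rintro ⟨h1, h2⟩
    have h3 : (q - p).1 ≠ 0 := fun h => h1 (sub_eq_zero.mp h).symm
    cases hf : forward (q - p).1 p.1
    · refine ⟨⟨-(q - p), by simpa [sub_eq_zero, eq_comm] using h1, key _ h2⟩, ?_⟩
      rw [← forward_neg] at hf
      simp only [shift, Prod.fst_neg, hf]
      simp
    · refine ⟨⟨q - p, h3, h2⟩, ?_⟩
      simp only [shift, hf]
      simp

variable {D}

lemma shift_left_injective {g g' : D.Rest} {p : ZMod 4 × C} (h : shift g p = shift g' p) :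
    g = g' := by
  have key : ∀ i j k : ZMod 4, i ≠ 0 → (if forward i k then k + i else k - i) =
      (if forward j k then k + j else k - j) → forward i k = forward j k := by decide
  have h1 := key g.1.1 g'.1.1 p.1 g.2.1 (by
    have := congrArg Prod.fst h
    simpa only [shift, apply_ite Prod.fst, Prod.fst_add, Prod.fst_sub] using this)
  apply Subtype.ext
  cases hf : forward g.1.1 p.1
  · simpa [shift, hf, ← h1] using h
  · simpa [shift, hf, ← h1] using h

lemma levelOp_shift (S : ZMod 4 → SteinerQuasigroup C) (p : ZMod 4 × C) (g : D.Rest) :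
    levelOp D S p (shift g p) = .inl g := by
  have h : ∃ g' : D.Rest, shift g' p = shift g p := ⟨g, rfl⟩
  rw [levelOp, dif_pos h, shift_left_injective h.choose_spec]

lemma levelOp_level (S : ZMod 4 → SteinerQuasigroup C) (i : ZMod 4) (a b : C) :
    levelOp D S (i, a) (i, b) = .inr (i, (S i).op a b) := by
  rw [levelOp, dif_neg (by rw [exists_shift_iff]; simp), if_pos rfl]

lemma levelOp_add (S : ZMod 4 → SteinerQuasigroup C) (p : ZMod 4 × C) {d : ZMod 4 × C}
    (hd : d ∈ D.carrier) : levelOp D S p (p + d) = .inr (p + D.turn d) := by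
  rw [levelOp, dif_neg (by rw [exists_shift_iff]; simp [hd]), if_neg (by simp [D.fst_ne_zero d hd]),
    add_sub_cancel_left]

variable (D) in
lemma levelOp_cases (p q : ZMod 4 × C) :
    (∃ g : D.Rest, q = shift g p) ∨ (∃ i a b, p = (i, a) ∧ q = (i, b)) ∨
      ∃ d ∈ D.carrier, q = p + d := by
  by_cases h : ∃ g : D.Rest, shift g p = q
  · obtain ⟨g, rfl⟩ := h
    exact .inl ⟨g, rfl⟩
  · right
    rw [exists_shift_iff] at h
    by_cases h1 : p.1 = q.1
    · exact .inl ⟨p.1, p.2, q.2, rfl, by rw [h1]⟩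
    · refine .inr ⟨q - p, ?_, by abel⟩
      by_contra h2
      exact h ⟨h1, h2⟩

/-- The Steiner triple system on the uncovered differences and `ZMod 4 × C`. -/
def level (B : SteinerQuasigroup D.Rest) (S : ZMod 4 → SteinerQuasigroup C) :
    SteinerQuasigroup (D.Rest ⊕ ZMod 4 × C) where
  op
    | .inl x, .inl y => .inl (B.op x y)
    | .inl x, .inr p => .inr (shift x p)
    | .inr p, .inl x => .inr (shift x p)
    | .inr p, .inr q => levelOp D S p q
  idem p := by
    rcases p with x | ⟨i, a⟩
    · simp [B.idem]
    · simp [levelOp_level, (S i).idem]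
  comm p q := by
    rcases p with x | p <;> rcases q with y | q
    · simp [B.comm]
    · rfl
    · rfl
    · rcases levelOp_cases D p q with ⟨g, rfl⟩ | ⟨i, a, b, rfl, rfl⟩ | ⟨d, hd, rfl⟩
      · have := levelOp_shift S (shift g p) g
        rw [shift_shift] at this
        simp only [levelOp_shift, this]
      · simp only [levelOp_level, (S i).comm]
      · have := levelOp_add S (p + d) (D.neg_mem d hd)
        rw [add_neg_cancel_right, D.turn_neg d hd, add_add_sub_cancel] at this
        simp only [levelOp_add S p hd, this]
  inv p q := by
    rcases p with x | p <;> rcases q with y | q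
    · simp [B.inv]
    · simp [shift_shift]
    · simp [levelOp_shift]
    · rcases levelOp_cases D p q with ⟨g, rfl⟩ | ⟨i, a, b, rfl, rfl⟩ | ⟨d, hd, rfl⟩
      · simp [levelOp_shift]
      · simp [levelOp_level, (S i).inv]
      · simp [levelOp_add S p hd, levelOp_add S p (D.turn_mem d hd), D.turn_turn d hd]

lemma level_isMooreFamily {α : Type*} (B : SteinerQuasigroup D.Rest)
    (S : α → ZMod 4 → SteinerQuasigroup C) :
    IsMooreFamily B shift fun v => level B (S v) where
  base _ _ _ := rfl
  act _ _ _ := rfl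

end SteinerQuasigroup

namespace SteinerQuasigroup

/-- The differences `±(1, j)`, `±(1, t + j)`, `±(2, t + 2 j)`. -/
def sixDifferences {R : Type*} [Ring R] (t j : R) : Fin 6 → ZMod 4 × R :=
  ![(1, j), (1, t + j), (3, -j), (3, -(t + j)), (2, t + 2 * j), (2, -(t + 2 * j))]

/-- The differences obtained from `0 ≤ j < t`. -/
def labelled (w t : ℕ) (p : Fin 6 × Fin t) : ZMod 4 × ZMod w :=
  sixDifferences (t : ZMod w) ((p.2 : ℕ) : ZMod w) p.1

lemma natCast_zmod_inj {w a b : ℕ} (ha : a < w) (hb : b < w) (h : (a : ZMod w) = b) : a = b := by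
  rw [ZMod.natCast_eq_natCast_iff'] at h
  rwa [Nat.mod_eq_of_lt ha, Nat.mod_eq_of_lt hb] at h

lemma two_mul_zmod_inj {w a b : ℕ} (hw : Odd w) (ha : a < w) (hb : b < w)
    (h : (2 : ZMod w) * a = 2 * b) : a = b := by
  have h2 : IsUnit (2 : ZMod w) := by
    have := (ZMod.isUnit_iff_coprime 2 w).mpr (Nat.coprime_two_left.mpr hw)
    simpa using this
  exact natCast_zmod_inj ha hb (h2.mul_left_cancel h)

lemma labelled_injective {w t : ℕ} (hw : Odd w) (ht : 3 * t ≤ w) :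
    Function.Injective (labelled w t) := by
  rintro ⟨l, i, hi⟩ ⟨m, j, hj⟩ h
  have h13 : (1 : ZMod 4) ≠ 3 := by decide
  have h12 : (1 : ZMod 4) ≠ 2 := by decide
  have h32 : (3 : ZMod 4) ≠ 2 := by decide
  have e1 : (i : ZMod w) = j → i = j := natCast_zmod_inj (by omega) (by omega)
  have e2 : (i : ZMod w) ≠ t + j := fun h => by
    have := natCast_zmod_inj (a := i) (b := t + j) (w := w) (by omega) (by omega) (by
      push_cast
      exact h)
    omega
  have e3 : (j : ZMod w) ≠ t + i := fun h => by
    have := natCast_zmod_inj (a := j) (b := t + i) (w := w) (by omega) (by omega) (by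
      push_cast
      exact h)
    omega
  have e4 : (2 : ZMod w) * i = 2 * j → i = j := two_mul_zmod_inj hw (by omega) (by omega)
  have e5 : (t + 2 * i : ZMod w) ≠ -(t + 2 * j) := fun h => by
    have := two_mul_zmod_inj (a := t + i + j) (b := 0) hw (by omega) (by omega) (by
      push_cast
      linear_combination h)
    omega
  have e6 : (-(t + 2 * i) : ZMod w) ≠ t + 2 * j := fun h => by
    have := two_mul_zmod_inj (a := t + i + j) (b := 0) hw (by omega) (by omega) (by
      push_cast
      linear_combination -h)
    omega
  fin_cases l <;> fin_cases m <;>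
    simp_all [labelled, sixDifferences, h13.symm, h12.symm, h32.symm, e3.symm]
  · exact e2 (by linear_combination -h)
  · exact e3 (by linear_combination h)

/-- The action of turning on the labels. -/
def turnLabel : Fin 6 → Fin 6 := ![4, 2, 1, 5, 0, 3]

/-- The labels of opposite differences. -/
def negLabel : Fin 6 → Fin 6 := ![2, 3, 0, 1, 5, 4]

lemma labelled_neg (w t : ℕ) (l : Fin 6) (j : Fin t) :
    -labelled w t (l, j) = labelled w t (negLabel l, j) := by
  have h1 : (-1 : ZMod 4) = 3 := by decide
  have h3 : (-3 : ZMod 4) = 1 := by decide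
  have h2 : (-2 : ZMod 4) = 2 := by decide
  fin_cases l <;> simp [labelled, sixDifferences, negLabel, h1, h2, h3]

lemma labelled_turn (w t : ℕ) (l : Fin 6) (j : Fin t) :
    labelled w t (turnLabel (negLabel l), j) =
      labelled w t (turnLabel l, j) - labelled w t (l, j) := by
  have h1 : (2 - 1 : ZMod 4) = 1 := by decide
  have h2 : (3 - 1 : ZMod 4) = 2 := by decide
  have h3 : (1 - 3 : ZMod 4) = 2 := by decide
  have h4 : (2 - 3 : ZMod 4) = 3 := by decide
  have h5 : (1 - 2 : ZMod 4) = 3 := by decide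
  have h6 : (3 - 2 : ZMod 4) = 1 := by decide
  fin_cases l <;> simp [labelled, sixDifferences, negLabel, turnLabel, h1, h2, h3, h4, h5, h6] <;>
    ring

/-- The difference set formed by the labelled differences. -/
def labelledSet {w t : ℕ} (hw : Odd w) (ht : 3 * t ≤ w) : DifferenceSet (ZMod w) where
  carrier := Set.range (labelled w t)
  turn := Function.extend (labelled w t) (fun p => labelled w t (turnLabel p.1, p.2)) id
  neg_mem := by
    rintro _ ⟨⟨l, j⟩, rfl⟩
    exact ⟨_, (labelled_neg w t l j).symm⟩
  turn_mem := by
    rintro _ ⟨p, rfl⟩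
    rw [(labelled_injective hw ht).extend_apply]
    exact ⟨_, rfl⟩
  turn_turn := by
    rintro _ ⟨⟨l, j⟩, rfl⟩
    rw [(labelled_injective hw ht).extend_apply, (labelled_injective hw ht).extend_apply]
    fin_cases l <;> rfl
  turn_neg := by
    rintro _ ⟨⟨l, j⟩, rfl⟩
    rw [labelled_neg, (labelled_injective hw ht).extend_apply,
      (labelled_injective hw ht).extend_apply, labelled_turn]
  fst_ne_zero := by
    rintro _ ⟨⟨l, j⟩, rfl⟩
    have h1 : (1 : ZMod 4) ≠ 0 := by decide
    have h3 : (3 : ZMod 4) ≠ 0 := by decide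
    have h2 : (2 : ZMod 4) ≠ 0 := by decide
    fin_cases l <;> simp [labelled, sixDifferences, h1, h2, h3]

lemma card_labelledSet_rest {w t : ℕ} [NeZero w] (hw : Odd w) (ht : 3 * t ≤ w) :
    Fintype.card (labelledSet hw ht).Rest + 6 * t = 3 * w := by
  have h1 : (univ.filter fun g : ZMod 4 × ZMod w => g.1 ≠ 0).card = 3 * w := by
    have : (univ.filter fun g : ZMod 4 × ZMod w => g.1 ≠ 0) =
        (univ.filter fun i : ZMod 4 => i ≠ 0) ×ˢ (univ : Finset (ZMod w)) := by
      ext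
      simp
    rw [this, Finset.card_product, Finset.card_univ, ZMod.card]
    congr 1
  have h2 : (univ.image (labelled w t)).card = 6 * t := by
    rw [Finset.card_image_of_injective _ (labelled_injective hw ht), Finset.card_univ]
    simp
  have h3 : univ.image (labelled w t) ⊆ univ.filter fun g : ZMod 4 × ZMod w => g.1 ≠ 0 := by
    intro g hg
    obtain ⟨p, -, rfl⟩ := Finset.mem_image.mp hg
    exact Finset.mem_filter.mpr ⟨Finset.mem_univ _,
      (labelledSet hw ht).fst_ne_zero _ ⟨p, rfl⟩⟩
  rw [Fintype.card_subtype, ← h1, ← h2, ← Finset.card_sdiff_add_card_eq_card h3]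
  congr 2
  ext g
  simp [labelledSet]

end SteinerQuasigroup

namespace SteinerQuasigroup

/-- The permutations that distinguish the levels, depending on the colour `c`. -/
def twist (w c : ℕ) (i : ZMod 4) : Equiv.Perm (ZMod w) :=
  if i = 2 then Equiv.swap 0 1 else if i = 3 then Equiv.swap 0 ((c + 2 : ℕ) : ZMod w) else 1

lemma twist_zero (w c : ℕ) : twist w c 0 = 1 := rfl

lemma twist_one (w c : ℕ) : twist w c 1 = 1 := rfl

lemma twist_two (w c : ℕ) : twist w c 2 = Equiv.swap 0 1 := rfl

lemma twist_three (w c : ℕ) : twist w c 3 = Equiv.swap 0 ((c + 2 : ℕ) : ZMod w) := rfl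

lemma twist_apply {w c : ℕ} (i : ZMod 4) {a : ZMod w}
    (ha : a ∉ ({0, 1, ((c + 2 : ℕ) : ZMod w)} : Finset (ZMod w))) : twist w c i a = a := by
  simp only [Finset.mem_insert, Finset.mem_singleton, not_or] at ha
  unfold twist
  split_ifs
  · exact Equiv.swap_apply_of_ne_of_ne ha.1 ha.2.1
  · exact Equiv.swap_apply_of_ne_of_ne ha.1 ha.2.2
  · rfl

lemma twist_symm {w c : ℕ} (i : ZMod 4) : (twist w c i).symm = twist w c i := by
  unfold twist
  split_ifs
  · exact Equiv.symm_swap _ _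
  · exact Equiv.symm_swap _ _
  · rfl

lemma twist_twist {w c : ℕ} (i : ZMod 4) (a : ZMod w) : twist w c i (twist w c i a) = a := by
  rw [← Equiv.eq_symm_apply, twist_symm]

lemma twist_injOn {w c : ℕ} (hw : c + 2 < w) {i j : ZMod 4} (hij : i ≠ j)
    (h : twist w c i = twist w c j) : (i = 0 ∧ j = 1) ∨ (i = 1 ∧ j = 0) := by
  have : Fact (1 < w) := ⟨by omega⟩
  have h1 : ((c + 2 : ℕ) : ZMod w) ≠ 1 := fun h => by
    have := natCast_zmod_inj (a := c + 2) (b := 1) hw (by omega) (by simpa using h)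
    omega
  have h2 : ((c + 2 : ℕ) : ZMod w) ≠ 0 := fun h => by
    have := natCast_zmod_inj (a := c + 2) (b := 0) hw (by omega) (by simpa using h)
    omega
  have h0 := congrArg (fun e : Equiv.Perm (ZMod w) => e 0) h
  have key : ∀ i : ZMod 4, i = 0 ∨ i = 1 ∨ i = 2 ∨ i = 3 := by decide
  rcases key i with rfl | rfl | rfl | rfl <;> rcases key j with rfl | rfl | rfl | rfl <;>
    first
    | exact absurd rfl hij
    | (simp only [twist_zero, twist_one, twist_two, twist_three, Equiv.swap_apply_left,
        Equiv.Perm.one_apply] at h0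
       first
        | exact absurd h0 one_ne_zero
        | exact absurd h0.symm one_ne_zero
        | exact absurd h0 h1
        | exact absurd h0.symm h1
        | exact absurd h0 h2
        | exact absurd h0.symm h2
        | simp)

/-- The levels are rigid under affine maps, and determine the colour. -/
theorem twist_rigid {w c c' : ℕ} (hw : (c + 2) * (c' + 2) < w) (hw' : 12 ≤ w)
    (s : SteinerQuasigroup (ZMod w)) (f : Equiv.Perm (ZMod w)) (k b : ZMod w)
    (hf : ∀ a, f a = k * a + b) (κ d : ZMod 4) (hκ : κ + d ≠ d)
    (h : ∀ i, (s.map (twist w c i)).IsHom (s.map (twist w c' (κ * i + d))) f) :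
    (∀ a, f a = a) ∧ κ = 1 ∧ d = 0 ∧ c = c' := by
  have hcw : c + 2 < w := by nlinarith
  have hcw' : c' + 2 < w := by nlinarith
  have : Fact (1 < w) := ⟨by omega⟩
  have : NeZero w := ⟨by omega⟩
  have hom : ∀ i, s.IsHom s fun a => twist w c' (κ * i + d) (f (twist w c i a)) := by
    intro i x y
    have h1 := h i (twist w c i x) (twist w c i y)
    simp only [map, twist_symm, twist_twist] at h1
    simp only [h1, twist_twist]
  set T : Finset (ZMod w) := {0, 1, ((c + 2 : ℕ) : ZMod w)} ∪
    ({0, 1, ((c' + 2 : ℕ) : ZMod w)} : Finset (ZMod w)).image f.symm with hT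
  have hTc : T.card ≤ 6 := (Finset.card_union_le _ _).trans
    (Nat.add_le_add Finset.card_le_three (Finset.card_image_le.trans Finset.card_le_three))
  have happ : ∀ i, ∀ a ∉ T, twist w c' (κ * i + d) (f (twist w c i a)) = f a := by
    intro i a ha
    simp only [hT, Finset.mem_union, not_or] at ha
    rw [twist_apply i ha.1, twist_apply]
    intro hfa
    exact ha.2 (Finset.mem_image.mpr ⟨_, hfa, f.symm_apply_apply a⟩)
  have heq : ∀ i j a, twist w c' (κ * i + d) (f (twist w c i a)) =
      twist w c' (κ * j + d) (f (twist w c j a)) := by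
    intro i j
    apply congrFun
    refine (hom i).eq_of_card (hom j) (lt_of_lt_of_le ?_ (Nat.add_le_add_right
      (Nat.mul_le_mul_left 2 (Finset.card_le_card (s := univ \ T) ?_)) 1))
    · rw [Finset.card_sdiff_of_subset (Finset.subset_univ _), Finset.card_univ, ZMod.card]
      omega
    · intro a ha
      have ha := (Finset.mem_sdiff.mp ha).2
      simp [happ i a ha, happ j a ha]
  have h01 : twist w c' d = twist w c' (κ + d) := by
    ext a
    obtain ⟨a, rfl⟩ := f.surjective a
    have := heq 0 1 a
    simpa [twist_zero, twist_one] using this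
  have hfirst := twist_injOn hcw' hκ.symm h01
  have htw : twist w c' d = 1 := by
    rcases hfirst with ⟨hd, -⟩ | ⟨hd, -⟩ <;> rw [hd] <;> rfl
  have hcomm : ∀ i a, f (twist w c i a) = twist w c' (κ * i + d) (f a) := by
    intro i a
    have := heq i 0 a
    rw [mul_zero, zero_add, htw, twist_zero] at this
    rw [← twist_twist (c := c') (κ * i + d) (f (twist w c i a)), this]
    rfl
  have hc1 : ((c' + 2 : ℕ) : ZMod w) ≠ 1 := fun h => by
    have := natCast_zmod_inj (a := c' + 2) (b := 1) hcw' (by omega) (by simpa using h)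
    omega
  have h2 := hcomm 2 0
  have h3 := hcomm 3 0
  rw [twist_two, Equiv.swap_apply_left] at h2
  rw [twist_three, Equiv.swap_apply_left] at h3
  have h2' : f 1 ≠ f 0 := f.injective.ne one_ne_zero
  have h3' : f ((c + 2 : ℕ) : ZMod w) ≠ f 0 := f.injective.ne fun h => by
    have := natCast_zmod_inj (a := c + 2) (b := 0) hcw (by omega) (by simpa using h)
    omega
  have moved : ∀ x y z : ZMod w, Equiv.swap x y z ≠ z → z = x ∨ z = y := by
    intro x y z hz
    by_contra hcon
    rw [not_or] at hcon
    exact hz (Equiv.swap_apply_of_ne_of_ne hcon.1 hcon.2)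
  have hb := hf 0
  have hk := hf 1
  rw [mul_zero, zero_add] at hb
  rw [mul_one] at hk
  have hlam : (κ = 1 ∧ d = 0 ∧ κ * 2 + d = 2 ∧ κ * 3 + d = 3) ∨
      (κ * 2 + d = 3 ∧ κ * 3 + d = 2) := by
    clear * - hfirst
    revert hfirst
    revert κ d
    decide
  have hf0 : f 0 = 0 := by
    rcases hlam with ⟨-, -, e2, e3⟩ | ⟨e2, e3⟩ <;> rw [e2] at h2 <;> rw [e3] at h3 <;>
      rw [twist_two] at * <;> rw [twist_three] at *
    · rw [h2] at h2'
      rw [h3] at h3'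
      rcases moved _ _ _ h2' with h | h
      · exact h
      · rcases moved _ _ _ h3' with h' | h'
        · exact h'
        · exact absurd (h'.symm.trans h) hc1
    · rw [h2] at h2'
      rw [h3] at h3'
      rcases moved _ _ _ h2' with h | h
      · exact h
      · rcases moved _ _ _ h3' with h' | h'
        · exact h'
        · exact absurd (h.symm.trans h') hc1
  rw [hf0] at hb h2 h3
  subst hb
  rcases hlam with ⟨hκ1, hd0, e2, e3⟩ | ⟨e2, e3⟩
  · rw [e2, twist_two, Equiv.swap_apply_left, hk, add_zero] at h2
    subst h2
    have hid : ∀ a, f a = a := fun a => by simpa using hf a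
    refine ⟨hid, hκ1, hd0, ?_⟩
    rw [e3, twist_three, Equiv.swap_apply_left, hid] at h3
    have := natCast_zmod_inj hcw hcw' h3
    omega
  · exfalso
    rw [e2, twist_three, Equiv.swap_apply_left, hk, add_zero] at h2
    rw [e3, twist_two, Equiv.swap_apply_left, hf, add_zero, h2, ← Nat.cast_mul] at h3
    have := natCast_zmod_inj (a := (c' + 2) * (c + 2)) (b := 1) (w := w) (by linarith) (by omega)
      (by rw [h3, Nat.cast_one])
    nlinarith

end SteinerQuasigroup

namespace SteinerQuasigroup

/-- `φ` embeds `V` in `S` in such a way that restriction identifies `Aut S` with the group of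
automorphisms of `V` preserving the colouring `c`. -/
structure Realizes {α Q : Type*} (V : SteinerQuasigroup α) (c : α → ℕ) (S : SteinerQuasigroup Q)
    (φ : α → Q) : Prop where
  injective : Function.Injective φ
  isHom : V.IsHom S φ
  restrict : ∀ g : Equiv.Perm Q, S.IsHom S g →
    ∃ h : Equiv.Perm α, V.IsHom V h ∧ (∀ x, c (h x) = c x) ∧ ∀ x, g (φ x) = φ (h x)
  extend : ∀ h : Equiv.Perm α, V.IsHom V h → (∀ x, c (h x) = c x) →
    ∃! g : Equiv.Perm Q, S.IsHom S g ∧ ∀ x, g (φ x) = φ (h x)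

lemma IsHom.comp {P Q R : Type*} {S : SteinerQuasigroup P} {S' : SteinerQuasigroup Q}
    {S'' : SteinerQuasigroup R} {g : Q → R} {f : P → Q} (hg : S'.IsHom S'' g) (hf : S.IsHom S' f) :
    S.IsHom S'' (g ∘ f) := fun a b => by
  simp [hf a b, hg (f a) (f b)]

lemma Realizes.map {α Q R : Type*} {V : SteinerQuasigroup α} {c : α → ℕ}
    {S : SteinerQuasigroup Q} {φ : α → Q} (h : Realizes V c S φ) (e : Q ≃ R) :
    Realizes V c (S.map e) (e ∘ φ) where
  injective := e.injective.comp h.injective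
  isHom := (S.isHom_map e).comp h.isHom
  restrict g hg := by
    have hs : (S.map e).IsHom S e.symm := (S.isHom_map e).symm
    obtain ⟨k, hk, hc, hx⟩ := h.restrict (e.trans (g.trans e.symm))
      (hs.comp (hg.comp (S.isHom_map e)))
    refine ⟨k, hk, hc, fun x => ?_⟩
    simp [← hx x]
  extend k hk hc := by
    have hs : (S.map e).IsHom S e.symm := (S.isHom_map e).symm
    obtain ⟨g, ⟨hg, hx⟩, huniq⟩ := h.extend k hk hc
    refine ⟨e.symm.trans (g.trans e), ⟨(S.isHom_map e).comp (hg.comp hs), fun x => by simp [hx]⟩,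
      ?_⟩
    rintro g' ⟨hg', hx'⟩
    have := huniq (e.trans (g'.trans e.symm)) ⟨hs.comp (hg'.comp (S.isHom_map e)), fun x => by
      simpa using congrArg e.symm (hx' x)⟩
    rw [← this]
    ext
    simp

lemma addMonoidHom_eq_zero {A B : Type*} [AddCommGroup A] [AddCommGroup B] {m n : ℕ}
    (h : Nat.Coprime m n) (hA : ∀ a : A, m • a = 0) (hB : ∀ b : B, n • b = 0) (f : A →+ B) (a : A) :
    f a = 0 := by
  have h1 : addOrderOf (f a) ∣ m := addOrderOf_dvd_of_nsmul_eq_zero (by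
    rw [← map_nsmul, hA, map_zero])
  have h2 : addOrderOf (f a) ∣ n := addOrderOf_dvd_of_nsmul_eq_zero (hB _)
  exact AddMonoid.addOrderOf_eq_one_iff.mp (Nat.eq_one_of_dvd_coprimes h h1 h2)

lemma zmod_addMonoidHom_apply {n : ℕ} [NeZero n] (f : ZMod n →+ ZMod n) (a : ZMod n) :
    f a = f 1 * a := by
  conv_lhs => rw [← ZMod.natCast_zmod_val a, ← nsmul_one, map_nsmul, nsmul_eq_mul,
    ZMod.natCast_zmod_val, mul_comm]

/-- Endomorphisms of `ZMod 4 × ZMod w` are diagonal when `w` is odd. -/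
lemma addMonoidHom_prod_apply {w : ℕ} [NeZero w] (hw : Odd w)
    (f : ZMod 4 × ZMod w →+ ZMod 4 × ZMod w) (i : ZMod 4) (a : ZMod w) :
    f (i, a) = ((f (1, 0)).1 * i, (f (0, 1)).2 * a) := by
  have h4 : Nat.Coprime 4 w := by
    have := Nat.Coprime.pow_left 2 (Nat.coprime_two_left.mpr hw)
    simpa using this
  have e : ((i, a) : ZMod 4 × ZMod w) = (i, 0) + (0, a) := by simp
  have hz : ∀ b : ZMod w, w • b = 0 := fun b => by simp
  have hz4 : ∀ b : ZMod 4, 4 • b = 0 := by decide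
  have h1 : (f (0, a)).1 = 0 := addMonoidHom_eq_zero h4.symm hz hz4
    ((AddMonoidHom.fst _ _).comp (f.comp (AddMonoidHom.inr _ _))) a
  have h2 : (f (i, 0)).2 = 0 := addMonoidHom_eq_zero h4 hz4 hz
    ((AddMonoidHom.snd _ _).comp (f.comp (AddMonoidHom.inl _ _))) i
  have h3 : (f (i, 0)).1 = (f (1, 0)).1 * i := zmod_addMonoidHom_apply
    ((AddMonoidHom.fst _ _).comp (f.comp (AddMonoidHom.inl _ _))) i
  have h4 : (f (0, a)).2 = (f (0, 1)).2 * a := zmod_addMonoidHom_apply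
    ((AddMonoidHom.snd _ _).comp (f.comp (AddMonoidHom.inr _ _))) a
  rw [e, map_add]
  ext
  · simp [h1, h3]
  · simp [h2, h4]

section Construction

variable {α : Type*} {w : ℕ}

lemma isMooreRange_shift [Fintype α] [NeZero w] {t : ℕ} (hw : Odd w) (ht : 4 * t ≤ w)
    (ht' : w < 6 * t) (hα : 7 ≤ Fintype.card α) :
    IsMooreRange α (shift (D := labelledSet (t := t) hw (by omega))) := by
  have hc := card_labelledSet_rest (t := t) hw (by omega)
  have hA : Fintype.card (ZMod 4 × ZMod w) = 4 * w := by
    rw [Fintype.card_prod, ZMod.card, ZMod.card]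
  refine ⟨hα, by omega, by omega, ?_, ?_⟩
  · intro T hT
    have hsub : T ⊆ {(0, 0), (2, 0)} := by
      rintro ⟨i, a⟩ hd
      have hd := hT _ hd
      simp only [Prod.mk_add_mk, Prod.mk_eq_zero] at hd
      have hi : i = 0 ∨ i = 2 := by
        have := hd.1
        clear * - this
        revert this i
        decide
      have ha : a = 0 := by
        have h2 : IsUnit (2 : ZMod w) := by
          simpa using (ZMod.isUnit_iff_coprime 2 w).mpr (Nat.coprime_two_left.mpr hw)
        exact h2.mul_left_cancel (by rw [two_mul, hd.2, mul_zero])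
      rcases hi with rfl | rfl <;> simp [ha]
    exact (Finset.card_le_card hsub).trans Finset.card_le_two
  · refine ⟨univ.image (Prod.mk (1 : ZMod 4)), ?_, ?_⟩
    · intro a ha x c
      obtain ⟨b, -, rfl⟩ := Finset.mem_image.mp ha
      exact shift_reflect x rfl c
    · rw [Finset.card_image_of_injective _ (Prod.mk_right_injective (1 : ZMod 4)),
        Finset.card_univ, ZMod.card]
      have h2 := Nat.mul_le_mul_right w hα
      omega

variable [Nonempty α] {D : DifferenceSet (ZMod w)} (V : SteinerQuasigroup α) (c : α → ℕ)
  (s : SteinerQuasigroup (ZMod w)) (B : SteinerQuasigroup D.Rest)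

/-- Moore's construction with levels twisted according to the colours. -/
def colourMoore : SteinerQuasigroup (D.Rest ⊕ α × (ZMod 4 × ZMod w)) :=
  moore V (level_isMooreFamily B fun v i => s.map (twist w (c v) i))

lemma colourMoore_level (v : α) (i : ZMod 4) (a b : ZMod w) :
    (colourMoore V c s B).op (.inr (v, (i, a))) (.inr (v, (i, b))) =
      .inr (v, (i, (s.map (twist w (c v) i)).op a b)) := by
  have h := moore_fiberMap (V := V) (level_isMooreFamily B fun v i => s.map (twist w (c v) i)) v
    (.inr (i, a)) (.inr (i, b))
  exact h.trans (congrArg (fiberMap v) (levelOp_level (fun i => s.map (twist w (c v) i)) i a b))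

lemma colourMoore_shift (v : α) (g : D.Rest) (p : ZMod 4 × ZMod w) :
    (colourMoore V c s B).op (.inr (v, p)) (.inr (v, shift g p)) = .inl g := by
  have h := moore_fiberMap (V := V) (level_isMooreFamily B fun v i => s.map (twist w (c v) i)) v
    (.inr p) (.inr (shift g p))
  exact h.trans (congrArg (fiberMap v) (levelOp_shift (fun i => s.map (twist w (c v) i)) p g))

variable {c} [Fintype α] [NeZero w]

lemma colourMoore_aut (hw : Odd w) (hw' : 12 ≤ w) (hr : IsMooreRange α (shift (D := D)))
    (hc : ∀ v z, (c v + 2) * (c z + 2) < w) {F : Equiv.Perm (D.Rest ⊕ α × (ZMod 4 × ZMod w))}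
    (hF : (colourMoore V c s B).IsHom (colourMoore V c s B) F) :
    ∃ k : Equiv.Perm α, V.IsHom V k ∧ (∀ v, c (k v) = c v) ∧
      ∀ v a, F (.inr (v, a)) = .inr (k v, a) := by
  obtain ⟨k, φ, t, hk, hkt⟩ := moore_aut _ hr hF
  have hφ := addMonoidHom_prod_apply hw φ
  set κ := (φ (1, 0)).1
  set m := (φ (0, 1)).2
  have happ : ∀ v i a, F (.inr (v, (i, a))) =
      .inr (k v, (κ * i + (t v).1, m * a + (t v).2)) := by
    intro v i a
    rw [hkt, hφ]
    rfl
  have key : ∀ v, c (k v) = c v ∧ ∀ a, F (.inr (v, a)) = .inr (k v, a) := by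
    intro v
    have hinj : Function.Injective fun a : ZMod w => m * a + (t v).2 := by
      intro a b hab
      have : F (.inr (v, (0, a))) = F (.inr (v, (0, b))) := by
        rw [happ, happ]
        simpa using hab
      simpa using F.injective this
    have hne : κ + (t v).1 ≠ (t v).1 := by
      intro h
      have : F (.inr (v, (1, 0))) = F (.inr (v, (0, 0))) := by
        rw [happ, happ, mul_one, h]
        simp
      have := F.injective this
      simp only [Sum.inr.injEq, Prod.mk.injEq, true_and, and_true] at this
      exact absurd this (by decide)
    obtain ⟨h1, h2, h3, h4⟩ := twist_rigid (hc v (k v)) hw' s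
      (Equiv.ofBijective _ (Finite.injective_iff_bijective.mp hinj)) m (t v).2 (fun a => rfl)
      κ (t v).1 hne (by
        intro i a b
        have := hF (.inr (v, (i, a))) (.inr (v, (i, b)))
        rw [colourMoore_level, happ, happ, happ, colourMoore_level] at this
        simpa using this)
    refine ⟨h4.symm, fun ⟨i, a⟩ => ?_⟩
    have h5 : m * a + (t v).2 = a := h1 a
    rw [happ, h2, h3, h5, one_mul, add_zero]
  exact ⟨k, hk, fun v => (key v).1, fun v => (key v).2⟩

theorem colourMoore_realizes (hw : Odd w) (hw' : 12 ≤ w) (hr : IsMooreRange α (shift (D := D)))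
    (hc : ∀ v z, (c v + 2) * (c z + 2) < w) :
    Realizes V c (colourMoore V c s B) fun v => .inr (v, 0) where
  injective := fun v z h => by simpa using h
  isHom v z := by
    rcases eq_or_ne v z with rfl | h
    · rw [V.idem, SteinerQuasigroup.idem]
    · rw [colourMoore, moore_of_ne _ h]
      simp
  restrict g hg := by
    obtain ⟨k, hk, hkc, hkg⟩ := colourMoore_aut V s B hw hw' hr hc hg
    exact ⟨k, hk, hkc, fun x => hkg x 0⟩
  extend h hh hhc := by
    set G : Equiv.Perm (D.Rest ⊕ α × (ZMod 4 × ZMod w)) :=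
      (Equiv.refl _).sumCongr (h.prodCongr (Equiv.refl _)) with hG
    have hGf : ∀ v p, G (fiberMap v p) = fiberMap (h v) p := by
      rintro v (x | a) <;> rfl
    have hGr : ∀ v a, G (.inr (v, a)) = .inr (h v, a) := fun _ _ => rfl
    refine ⟨G, ⟨?_, fun _ => rfl⟩, ?_⟩
    · intro p q
      rcases fiber_cases p q with ⟨v, p, q, rfl, rfl⟩ | ⟨v, z, a, b, hvz, rfl, rfl⟩
      · rw [colourMoore, moore_fiberMap, hGf, hGf, hGf, moore_fiberMap]
        simp only [hhc]
      · rw [colourMoore, moore_of_ne _ hvz, hGr, hGr, hGr, moore_of_ne _ (h.injective.ne hvz), hh]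
    · rintro g ⟨hg, hgx⟩
      obtain ⟨k, hk, hkc, hkg⟩ := colourMoore_aut V s B hw hw' hr hc hg
      have hkh : ∀ v, k v = h v := fun v => by
        have := (hkg v 0).symm.trans (hgx v)
        simpa using this
      ext p
      rcases p with x | ⟨v, a⟩
      · obtain ⟨v⟩ := ‹Nonempty α›
        rw [← colourMoore_shift V c s B v x 0, hg, hkg, hkg, colourMoore_shift,
          colourMoore_shift]
        rfl
      · rw [hkg, hGr, hkh]

end Construction

end SteinerQuasigroup

namespace SteinerQuasigroup

lemma card_mod_two {P : Type*} [Fintype P] (S : SteinerQuasigroup P) (p : P) :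
    Fintype.card P % 2 = 1 := by
  have hfix : Function.fixedPoints (S.op p) = {p} := by
    ext q
    simpa [Function.IsFixedPt, eq_comm] using S.op_eq_right (a := p) (b := q)
  have h := Equiv.Perm.card_fixedPoints_modEq (f := S.op p) (p := 2) (n := 1)
    (funext fun q => S.inv p q)
  simpa [Nat.ModEq, hfix] using h

lemma card_mod_three {P : Type*} [Fintype P] (S : SteinerQuasigroup P) :
    Fintype.card P * Fintype.card P ≡ Fintype.card P [MOD 3] := by
  have h := Equiv.Perm.card_fixedPoints_modEq (f := fun q : P × P => (q.2, S.op q.1 q.2)) (p := 3)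
    (n := 1) (funext fun q => by
      change (S.op q.2 (S.op q.1 q.2), S.op (S.op q.1 q.2) (S.op q.2 (S.op q.1 q.2))) = q
      rw [S.comm q.1, S.inv, S.comm q.2, S.comm _ q.1, S.inv])
  have e : P ≃ Function.fixedPoints fun q : P × P => (q.2, S.op q.1 q.2) := {
    toFun p := ⟨(p, p), by simp [Function.IsFixedPt, S.idem]⟩
    invFun q := q.1.1
    left_inv _ := rfl
    right_inv := by
      rintro ⟨⟨a, b⟩, hab⟩
      have : b = a := congrArg Prod.fst hab
      simp [this] }
  rwa [Fintype.card_prod, ← Fintype.card_congr e] at h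

lemma card_mod_six {P : Type*} [Fintype P] [Nonempty P] (S : SteinerQuasigroup P) :
    Fintype.card P % 6 = 1 ∨ Fintype.card P % 6 = 3 := by
  have h2 := S.card_mod_two (Classical.arbitrary P)
  have h3 : (Fintype.card P % 3) * (Fintype.card P % 3) % 3 = Fintype.card P % 3 := by
    rw [← Nat.mul_mod]
    exact S.card_mod_three
  have : Fintype.card P % 3 ≠ 2 := fun h => by simp [h] at h3
  omega

/-- Parameters for Moore's construction, for each large admissible order `u`. -/
lemma exists_moore_parameters {v : ℕ} (hv : v % 6 = 1) (K : ℕ) :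
    ∃ N, ∀ u, N ≤ u → u % 6 = 1 ∨ u % 6 = 3 → ∃ w t, (w % 6 = 3 ∨ w % 12 = 7) ∧ K < w ∧
      4 * t ≤ w ∧ w < 6 * t ∧ u + 6 * t = (4 * v + 3) * w := by
  set M := 4 * v + 2 with hM
  refine ⟨M * (24 * M + K), fun u hu hmod => ?_⟩
  set n := u / M with hn
  have hM0 : 0 < M := by omega
  have hn1 : 24 * M + K ≤ n := (Nat.le_div_iff_mul_le hM0).mpr (by rwa [mul_comm])
  have hn2 : M * n ≤ u := Nat.mul_div_le u M
  have hn3 : u < M * (n + 1) := Nat.lt_mul_div_succ u hM0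
  obtain ⟨w, hw1, hw2, hw3⟩ : ∃ w, n + 1 ≤ w ∧ w ≤ n + 12 ∧
      w % 12 = if u % 6 = 3 then 3 else 7 := by
    split_ifs
    · exact ⟨n + 1 + (3 + 11 * (n + 1)) % 12, by omega, by omega, by omega⟩
    · exact ⟨n + 1 + (7 + 11 * (n + 1)) % 12, by omega, by omega, by omega⟩
  have h1 : M * (n + 1) ≤ M * w := Nat.mul_le_mul_left _ hw1
  have h2 : M * w ≤ M * (n + 12) := Nat.mul_le_mul_left _ hw2
  have hmod6 : (M * w + w) % 6 = w % 6 := by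
    obtain ⟨k, rfl⟩ : ∃ k, v = 6 * k + 1 := ⟨v / 6, by omega⟩
    have : M * w + w = 6 * ((4 * k + 1) * w) + w := by rw [hM]; ring
    omega
  have hw6 : w % 6 = u % 6 := by split_ifs at hw3 <;> omega
  rw [mul_add] at h2
  refine ⟨w, (M * w + w - u) / 6, ?_, by omega, by omega, by omega, ?_⟩
  · split_ifs at hw3 <;> omega
  · have : (4 * v + 3) * w = M * w + w := by rw [hM]; ring
    omega

lemma eventually_realizes_of_mod_six {α : Type*} [Fintype α] (V : SteinerQuasigroup α) (c : α → ℕ)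
    (hv : 7 ≤ Fintype.card α) (hv6 : Fintype.card α % 6 = 1) :
    ∃ N, ∀ u, N ≤ u → u % 6 = 1 ∨ u % 6 = 3 →
      ∃ (S : SteinerQuasigroup (Fin u)) (φ : α → Fin u), Realizes V c S φ := by
  have : Nonempty α := Fintype.card_pos_iff.mp (by omega)
  set K := univ.sup c
  obtain ⟨N, hN⟩ := exists_moore_parameters hv6 (12 + (K + 2) * (K + 2))
  refine ⟨N, fun u hu hu6 => ?_⟩
  obtain ⟨w, t, hw6, hKw, ht, ht', hcard⟩ := hN u hu hu6
  have hw : Odd w := Nat.odd_iff.mpr (by omega)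
  have : NeZero w := ⟨by omega⟩
  obtain ⟨s⟩ : Nonempty (SteinerQuasigroup (ZMod w)) := by
    rcases hw6 with h | h
    · exact nonempty_of_card_mod_six (by rwa [ZMod.card])
    · exact nonempty_of_card_mod_twelve (by rwa [ZMod.card])
  have hrest := card_labelledSet_rest (t := t) hw (by omega)
  obtain ⟨B⟩ : Nonempty (SteinerQuasigroup (labelledSet (t := t) hw (by omega)).Rest) :=
    nonempty_of_card_mod_six (by omega)
  have hc : ∀ v z, (c v + 2) * (c z + 2) < w := fun v z => by
    have h1 : c v ≤ K := Finset.le_sup (mem_univ v)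
    have h2 : c z ≤ K := Finset.le_sup (mem_univ z)
    have := Nat.mul_le_mul (Nat.add_le_add_right h1 2) (Nat.add_le_add_right h2 2)
    omega
  have hR := colourMoore_realizes V s B hw (by omega) (isMooreRange_shift hw ht ht' hv) hc
  exact ⟨_, _, hR.map (Fintype.equivFinOfCardEq (by
    rw [Fintype.card_sum, Fintype.card_prod, Fintype.card_prod, ZMod.card, ZMod.card]
    have : (4 * Fintype.card α + 3) * w = Fintype.card α * (4 * w) + 3 * w := by ring
    omega))⟩

/-- Colours for the points of `double V` distinguishing the two copies of `V`. -/
def doubleColour {α : Type*} (c : α → ℕ) : Option (α × Bool) → ℕ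
  | none => 0
  | some (_, true) => 1
  | some (a, false) => c a + 2

lemma doubleColour_none {α : Type*} {c : α → ℕ} {x : Option (α × Bool)}
    (h : doubleColour c x = 0) : x = none := by
  rcases x with _ | ⟨a, _ | _⟩ <;> simp_all [doubleColour]

lemma doubleColour_false {α : Type*} {c : α → ℕ} {x : Option (α × Bool)} {n : ℕ}
    (h : doubleColour c x = n + 2) : ∃ a, x = some (a, false) ∧ c a = n := by
  rcases x with _ | ⟨a, _ | _⟩ <;> simp_all [doubleColour]

lemma double_none {α : Type*} (V : SteinerQuasigroup α) (a : α) :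
    V.double.op none (some (a, false)) = some (a, true) := rfl

lemma double_false {α : Type*} (V : SteinerQuasigroup α) :
    V.IsHom V.double fun a => some (a, false) := by
  intro a b
  rcases eq_or_ne a b with rfl | h
  · rw [V.idem, SteinerQuasigroup.idem]
  · simp [double, doubleOp, h]

lemma IsHom.double {α : Type*} {V : SteinerQuasigroup α} {h : Equiv.Perm α} (hh : V.IsHom V h) :
    V.double.IsHom V.double (h.prodCongr (Equiv.refl Bool)).optionCongr := by
  rintro (_ | ⟨a, i⟩) (_ | ⟨b, j⟩) <;> try rfl
  rcases eq_or_ne a b with rfl | hab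
  · rcases eq_or_ne i j with rfl | hij
    · simp [SteinerQuasigroup.idem]
    · simp [SteinerQuasigroup.double, doubleOp, hij]
  · simp [SteinerQuasigroup.double, doubleOp, hab, hh a b]

lemma Realizes.of_double {α Q : Type*} [Finite α] {V : SteinerQuasigroup α} {c : α → ℕ}
    {S : SteinerQuasigroup Q} {φ : Option (α × Bool) → Q}
    (H : Realizes V.double (doubleColour c) S φ) :
    Realizes V c S fun a => φ (some (a, false)) where
  injective a b hab := by simpa using H.injective hab
  isHom := H.isHom.comp V.double_false
  restrict g hg := by
    obtain ⟨k, hk, hkc, hkg⟩ := H.restrict g hg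
    choose f hf hfc using fun a => doubleColour_false (hkc (some (a, false)))
    have hinj : Function.Injective f := fun a b hab => by
      have : k (some (a, false)) = k (some (b, false)) := by rw [hf, hf, hab]
      simpa using k.injective this
    refine ⟨Equiv.ofBijective f (Finite.injective_iff_bijective.mp hinj), fun a b => ?_, hfc,
      fun a => by rw [hkg, hf, Equiv.ofBijective_apply]⟩
    have h1 := hk (some (a, false)) (some (b, false))
    rw [← V.double_false a b, hf, hf, hf, ← V.double_false] at h1
    simpa using h1
  extend h hh hhc := by
    obtain ⟨g, ⟨hg, hgx⟩, huniq⟩ := H.extend _ hh.double (by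
      rintro (_ | ⟨a, _ | _⟩) <;> simp [doubleColour, hhc])
    refine ⟨g, ⟨hg, fun a => hgx _⟩, ?_⟩
    rintro g' ⟨hg', hgx'⟩
    refine huniq g' ⟨hg', fun x => ?_⟩
    obtain ⟨k, hk, hkc, hkg⟩ := H.restrict g' hg'
    have h0 : k none = none := doubleColour_none (hkc none)
    have h1 : ∀ a, k (some (a, false)) = some (h a, false) := fun a =>
      H.injective ((hkg _).symm.trans (hgx' a))
    rw [hkg]
    rcases x with _ | ⟨a, _ | _⟩
    · simp [h0]
    · simp [h1]
    · rw [← V.double_none, hk, h0, h1, V.double_none]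
      rfl

/-- Every coloured system is realized in systems of all large admissible orders. -/
theorem eventually_realizes {α : Type*} [Fintype α] [Nonempty α] (V : SteinerQuasigroup α)
    (c : α → ℕ) :
    ∃ N, ∀ u, N ≤ u → u % 6 = 1 ∨ u % 6 = 3 →
      ∃ (S : SteinerQuasigroup (Fin u)) (φ : α → Fin u), Realizes V c S φ := by
  have h0 : 0 < Fintype.card α := Fintype.card_pos
  have h1 : Fintype.card (Option (α × Bool)) = 2 * Fintype.card α + 1 := by
    rw [Fintype.card_option, Fintype.card_prod, Fintype.card_bool, mul_comm]
  rcases V.card_mod_six with h | h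
  · have h2 : Fintype.card (Option (Option (α × Bool) × Bool)) = 4 * Fintype.card α + 3 := by
      rw [Fintype.card_option, Fintype.card_prod, Fintype.card_bool, h1]
      ring
    obtain ⟨N, hN⟩ := eventually_realizes_of_mod_six V.double.double
      (doubleColour (doubleColour c)) (by omega) (by omega)
    exact ⟨N, fun u hu hu6 => by
      obtain ⟨S, φ, hφ⟩ := hN u hu hu6
      exact ⟨S, _, hφ.of_double.of_double⟩⟩
  · obtain ⟨N, hN⟩ := eventually_realizes_of_mod_six V.double (doubleColour c)
      (by omega) (by omega)
    exact ⟨N, fun u hu hu6 => by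
      obtain ⟨S, φ, hφ⟩ := hN u hu hu6
      exact ⟨S, _, hφ.of_double⟩⟩

end SteinerQuasigroup

namespace SteinerQuasigroup

/-- `T` is the set of triples of the Steiner quasigroup `S`. -/
def HasTriples {P : Type*} (S : SteinerQuasigroup P) (T : Finset (Finset P)) : Prop :=
  ∀ t, t ∈ T ↔ ∃ p q, p ≠ q ∧ t = {p, q, S.op p q}

lemma exists_hasTriples {P : Type*} [Fintype P] (S : SteinerQuasigroup P) :
    ∃ T, S.HasTriples T :=
  ⟨univ.filter fun t => ∃ p q, p ≠ q ∧ t = {p, q, S.op p q}, fun t => by simp⟩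

section Triples

variable {P Q : Type*} {S : SteinerQuasigroup P} {T : Finset (Finset P)}
  {S' : SteinerQuasigroup Q} {T' : Finset (Finset Q)}

lemma HasTriples.eq_of_mem (h : S.HasTriples T) {t : Finset P} (ht : t ∈ T) {p q : P}
    (hp : p ∈ t) (hq : q ∈ t) (hpq : p ≠ q) : t = {p, q, S.op p q} := by
  obtain ⟨a, b, -, rfl⟩ := (h t).mp ht
  have h1 := S.inv_right a b
  have h2 := S.inv a b
  have h3 := S.comm a b
  simp only [mem_insert, mem_singleton] at hp hq
  rcases hp with rfl | rfl | rfl <;> rcases hq with rfl | rfl | rfl <;>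
    first
      | exact absurd rfl hpq
      | (ext x
         grind [S.comm])

lemma HasTriples.isSTS (h : S.HasTriples T) : IsSTS T := by
  constructor
  · intro t ht
    obtain ⟨p, q, hpq, rfl⟩ := (h t).mp ht
    have h1 : p ≠ S.op p q := fun e => hpq (S.op_eq_left.mp e.symm).symm
    have h2 : q ≠ S.op p q := fun e => hpq (S.op_eq_right.mp e.symm)
    exact card_eq_three.mpr ⟨_, _, _, hpq, h1, h2, rfl⟩
  · intro p q hpq
    refine ⟨{p, q, S.op p q}, ⟨(h _).mpr ⟨p, q, hpq, rfl⟩, by simp, by simp⟩, ?_⟩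
    rintro t ⟨ht, hp, hq⟩
    exact h.eq_of_mem ht hp hq hpq

lemma HasTriples.isHom_iff (h : S.HasTriples T) (h' : S'.HasTriples T') {f : P → Q}
    (hf : Function.Injective f) : S.IsHom S' f ↔ ∀ t ∈ T, t.image f ∈ T' := by
  constructor
  · intro hhom t ht
    obtain ⟨p, q, hpq, rfl⟩ := (h t).mp ht
    exact (h' _).mpr ⟨f p, f q, hf.ne hpq, by simp [hhom p q]⟩
  · intro hT p q
    rcases eq_or_ne p q with rfl | hpq
    · rw [S.idem, S'.idem]
    have h1 := hT _ ((h _).mpr ⟨p, q, hpq, rfl⟩)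
    have h2 := h'.eq_of_mem h1 (mem_image_of_mem f (by simp)) (mem_image_of_mem f (by simp))
      (hf.ne hpq)
    have h3 : f (S.op p q) ∈ ({f p, f q, S'.op (f p) (f q)} : Finset Q) := by
      rw [← h2]
      exact mem_image_of_mem f (by simp)
    simp only [mem_insert, mem_singleton] at h3
    rcases h3 with h3 | h3 | h3
    · exact absurd (S.op_eq_left.mp (hf h3)).symm hpq
    · exact absurd (S.op_eq_right.mp (hf h3)) hpq
    · exact h3

lemma HasTriples.isAut_iff (h : S.HasTriples T) (g : Equiv.Perm P) :
    IsAut T g ↔ S.IsHom S g := by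
  constructor
  · intro hg
    exact (h.isHom_iff h g.injective).mpr fun t => (hg t).mp
  · intro hg t
    refine ⟨(h.isHom_iff h g.injective).mp hg t, fun ht => ?_⟩
    have := (h.isHom_iff h g.symm.injective).mp hg.symm _ ht
    rwa [image_image, g.symm_comp_self, image_id] at this

lemma HasTriples.isCopy [Fintype P] (h : S.HasTriples T) (h' : S'.HasTriples T') {f : P → Q}
    (hf : Function.Injective f) (hhom : S.IsHom S' f) : IsCopy T T' f := by
  refine ⟨hf, (h.isHom_iff h' hf).mp hhom, fun t ht hsub => ?_⟩
  obtain ⟨x, y, hxy, rfl⟩ := (h' t).mp ht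
  obtain ⟨p, -, rfl⟩ := mem_image.mp (hsub (mem_insert_self x _))
  obtain ⟨q, -, rfl⟩ := mem_image.mp (hsub (mem_insert_of_mem (mem_insert_self y _)))
  exact ⟨_, (h _).mpr ⟨p, q, fun e => hxy (congrArg f e), rfl⟩, by simp [hhom p q]⟩

end Triples

end SteinerQuasigroup

lemma IsSTS.exists_quasigroup {α : Type*} {T : Finset (Finset α)} (hT : IsSTS T) :
    ∃ S : SteinerQuasigroup α, S.HasTriples T := by
  have hthird : ∀ p q, ∃ r, (p = q → r = p) ∧
      (p ≠ q → r ≠ p ∧ r ≠ q ∧ ({p, q, r} : Finset α) ∈ T) := by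
    intro p q
    rcases eq_or_ne p q with rfl | hpq
    · exact ⟨p, fun _ => rfl, fun h => absurd rfl h⟩
    obtain ⟨t, ⟨ht, hp, hq⟩, -⟩ := hT.2 p q hpq
    have hsub : {p, q} ⊆ t := by
      intro x
      simp only [mem_insert, mem_singleton]
      rintro (rfl | rfl) <;> assumption
    obtain ⟨r, hr, hrt⟩ := (Finset.exists_eq_insert_iff (s := {p, q}) (t := t)).mpr
      ⟨hsub, by rw [card_pair hpq, hT.1 t ht]⟩
    simp only [mem_insert, mem_singleton, not_or] at hr
    refine ⟨r, fun h => absurd h hpq, fun _ => ⟨hr.1, hr.2, ?_⟩⟩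
    have hrot : ({p, q, r} : Finset α) = {r, p, q} := by
      ext x
      simp only [mem_insert, mem_singleton]
      tauto
    rwa [hrot, hrt]
  choose f hf hf' using hthird
  have huniq : ∀ p q t, p ≠ q → t ∈ T → p ∈ t → q ∈ t → t = {p, q, f p q} :=
    fun p q t hpq ht hp hq =>
      (hT.2 p q hpq).unique ⟨ht, hp, hq⟩ ⟨(hf' p q hpq).2.2, by simp, by simp⟩
  have key : ∀ p q t, p ≠ q → t ∈ T → p ∈ t → q ∈ t → ∀ r ∈ t, r ≠ p → r ≠ q → f p q = r := by
    intro p q t hpq ht hp hq r hr hrp hrq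
    rw [huniq p q t hpq ht hp hq] at hr
    simpa [hrp, hrq, eq_comm] using hr
  refine ⟨⟨f, fun a => hf a a rfl, fun a b => ?_, fun a b => ?_⟩, fun t => ⟨fun ht => ?_, ?_⟩⟩
  · rcases eq_or_ne a b with rfl | hab
    · rfl
    obtain ⟨h1, h2, h3⟩ := hf' b a hab.symm
    exact key a b _ hab h3 (by simp) (by simp) _ (by simp) h2 h1
  · rcases eq_or_ne a b with rfl | hab
    · rw [hf a a rfl, hf a a rfl]
    obtain ⟨h1, h2, h3⟩ := hf' a b hab
    exact key a _ _ h1.symm h3 (by simp) (by simp) _ (by simp) hab.symm h2.symm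
  · obtain ⟨p, q, r, hpq, -, -, rfl⟩ := card_eq_three.mp (hT.1 t ht)
    exact ⟨p, q, hpq, huniq p q _ hpq ht (by simp) (by simp)⟩
  · rintro ⟨p, q, hpq, rfl⟩
    exact (hf' p q hpq).2.2

lemma image_perm_eq_iff {α : Type*} (W : Finset α) (h : Equiv.Perm α) :
    W.image h = W ↔ ∀ x, (if h x ∈ W then 1 else 0) = if x ∈ W then 1 else 0 := by
  have hiff : ∀ x, ((if h x ∈ W then 1 else 0) = if x ∈ W then 1 else 0) ↔ (h x ∈ W ↔ x ∈ W) := by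
    intro x
    split_ifs <;> simp_all
  simp only [hiff]
  constructor
  · intro hW x
    conv_lhs => rw [← hW]
    simp
  · intro hW
    ext y
    obtain ⟨x, rfl⟩ := h.surjective y
    simp [hW x]

/-- **Corollary 4.7.** If `V₁` is a proper subsystem of a Steiner triple system `V`,
then there is an integer `N` such that, for `u ≥ N` and `u ≡ 1` or `3 (mod 6)`,
there is a Steiner triple system `U` on `u` points having copies of `V` and `V₁` as
`Aut U`-invariant subsystems, such that `Aut U` is isomorphic (via restriction to
the copy of `V`) to the set-stabilizer of `V₁` in `Aut V`, and acts on the copy of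
`V` as that stabilizer. -/
theorem stmt17 {α : Type*} [Fintype α] (TV : Finset (Finset α)) (hV : IsSTS TV)
    (W : Finset α) (hSub : IsSub TV W) (hne : W ≠ Finset.univ) :
    ∃ N : ℕ, ∀ u : ℕ, N ≤ u → u % 6 = 1 ∨ u % 6 = 3 →
      ∃ T : Finset (Finset (Fin u)), IsSTS T ∧
        ∃ φ : α → Fin u, IsCopy TV T φ ∧
          AutInvariant T (Finset.univ.image φ) ∧ AutInvariant T (W.image φ) ∧
          (∀ g : Equiv.Perm (Fin u), IsAut T g →
            ∃! h : Equiv.Perm α, IsAut TV h ∧ W.image h = W ∧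
              ∀ x : α, g (φ x) = φ (h x)) ∧
          ∀ h : Equiv.Perm α, IsAut TV h → W.image h = W →
            ∃! g : Equiv.Perm (Fin u), IsAut T g ∧ ∀ x : α, g (φ x) = φ (h x) := by
  have : Nonempty α := by
    by_contra hα
    rw [not_nonempty_iff] at hα
    exact hne (Subsingleton.elim _ _)
  obtain ⟨V, hVT⟩ := hV.exists_quasigroup
  obtain ⟨N, hN⟩ := V.eventually_realizes fun x => if x ∈ W then 1 else 0
  refine ⟨N, fun u hu hu6 => ?_⟩
  obtain ⟨S, φ, hφ⟩ := hN u hu hu6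
  obtain ⟨T, hST⟩ := S.exists_hasTriples
  have hrestrict : ∀ g : Equiv.Perm (Fin u), IsAut T g → ∃ h : Equiv.Perm α,
      IsAut TV h ∧ W.image h = W ∧ ∀ x, g (φ x) = φ (h x) := by
    intro g hg
    obtain ⟨h, hh, hc, hx⟩ := hφ.restrict g ((hST.isAut_iff g).mp hg)
    exact ⟨h, (hVT.isAut_iff h).mpr hh, (image_perm_eq_iff W h).mpr hc, hx⟩
  have hinv : ∀ (X : Finset α) (g : Equiv.Perm (Fin u)) (h : Equiv.Perm α),
      (∀ x, g (φ x) = φ (h x)) → X.image h = X → (X.image φ).image g = X.image φ := by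
    intro X g h hx hX
    conv_rhs => rw [← hX]
    rw [image_image, image_image]
    exact congrArg (X.image ·) (funext hx)
  refine ⟨T, hST.isSTS, φ, hVT.isCopy hST hφ.injective hφ.isHom, fun g hg => ?_, fun g hg => ?_,
    fun g hg => ?_, fun h hh hW => ?_⟩
  · obtain ⟨h, -, -, hx⟩ := hrestrict g hg
    convert hinv univ g h hx (image_univ_of_surjective h.surjective)
  · obtain ⟨h, -, hW, hx⟩ := hrestrict g hg
    convert hinv W g h hx hW
  · obtain ⟨h, hh, hW, hx⟩ := hrestrict g hg
    exact ⟨h, ⟨hh, hW, hx⟩, fun h' hh' => Equiv.ext fun x =>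
      hφ.injective ((hh'.2.2 x).symm.trans (hx x))⟩
  · obtain ⟨g, ⟨hg, hx⟩, huniq⟩ := hφ.extend h ((hVT.isAut_iff h).mp hh)
      ((image_perm_eq_iff W h).mp hW)
    exact ⟨g, ⟨(hST.isAut_iff g).mpr hg, hx⟩, fun g' hg' =>
      huniq g' ⟨(hST.isAut_iff g').mp hg'.1, hg'.2⟩⟩

end
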